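/- The only member of Narayana's cows sequence greater than 99 that is a palindromic concatenation of two distinct repdigits in base 10 is 595. That is, if N_n = f1...f1 f2...f2 f1...f1 (with u1 copies of f1, then u2 copies of f2, then u1 copies of f1 in decimal), where f1, f2 are distinct digits, f1 ≥ 1, and u1, u2 ≥ 1, then N_n = 595. -/

import Mathlib

def narayana : ℕ → ℕ
  | 0 => 0
  | 1 => 1
  | 2 => 1
  | n + 3 => narayana (n + 2) + narayana n

open Polynomial in
theorem nz_coeff_det {c : ℕ} (A : Matrix (Fin c) (Fin c) ℝ[X]) (d : ℕ)
    (h : ∀ i j, (A i j).natDegree ≤ d) :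
    A.det.coeff (c * d) = (Matrix.of fun i j => (A i j).coeff d).det := by
  rw [Matrix.det_apply, Matrix.det_apply, finsetSum_coeff]
  refine Finset.sum_congr rfl fun σ _ => ?_
  have := coeff_prod_of_natDegree_le (s := (Finset.univ : Finset (Fin c)))
    (fun i => A (σ i) i) d (fun i _ => h _ _)
  rw [coeff_smul]
  simp only [Finset.card_univ, Fintype.card_fin] at this
  rw [this]
  rfl

open Polynomial in
theorem nz_natDegree_det {c : ℕ} (A : Matrix (Fin c) (Fin c) ℝ[X]) (d : ℕ)
    (h : ∀ i j, (A i j).natDegree ≤ d) :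
    A.det.natDegree ≤ c * d := by
  rw [Matrix.det_apply]
  refine natDegree_sum_le_of_forall_le _ _ fun σ _ => ?_
  refine (natDegree_smul_le _ _).trans ((natDegree_prod_le _ _).trans ?_)
  refine (Finset.sum_le_card_nsmul _ _ d fun i _ => h _ _).trans ?_
  simp

open Polynomial in
theorem nz_zero_estimate (K L E S q : ℕ) (hK : 1 ≤ K) (P : ℕ → ℝ[X])
    (hdeg : ∀ l < L, (P l).natDegree < K) (η κ : ℝ) (hη : 0 < η) (hη1 : η ≠ 1) (hκ : 0 < κ)
    (hEq : E ≤ q) (hES : K * L ≤ E * S)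
    (hv : ∀ e < E + L, ∀ s < S,
      ∑ l ∈ Finset.range L, (P l).eval ((e + q * s : ℕ) : ℝ) * (η ^ e * κ ^ s) ^ l = 0) :
    ∀ l < L, P l = 0 := by
  classical
  by_contra hcon
  push Not at hcon
  obtain ⟨l0, hl0, hl0'⟩ := hcon
  set s := (Finset.range L).filter (fun l => P l ≠ 0) with hs
  set c := s.card with hc
  have hl0s : l0 ∈ s := by simp [hs, hl0, hl0']
  have hcpos : 0 < c := Finset.card_pos.mpr ⟨l0, hl0s⟩
  have hcL : c ≤ L := by
    have := Finset.card_filter_le (Finset.range L) (fun l => P l ≠ 0)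
    simpa using this
  set f : Fin c ↪o ℕ := s.orderEmbOfFin rfl with hf
  have hfs : ∀ j, f j ∈ s := fun j => Finset.orderEmbOfFin_mem s rfl j
  have hfL : ∀ j, f j < L := fun j => by have := hfs j; simp [hs] at this; exact this.1
  have hf0 : ∀ j, P (f j) ≠ 0 := fun j => by have := hfs j; simp [hs] at this; exact this.2
  set A : Matrix (Fin c) (Fin c) ℝ[X] := Matrix.of fun i j =>
    C (η ^ ((i : ℕ) * f j)) * ((X + C 1) ^ (K - 1 - (P (f j)).natDegree) *
      (P (f j)).comp (X + C (i : ℝ))) with hA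
  have hnd : ∀ i j, ((X + C 1 : ℝ[X]) ^ (K - 1 - (P (f j)).natDegree) *
      (P (f j)).comp (X + C (i : ℝ))).natDegree = K - 1 := by
    intro i j
    have hne : (P (f j)).comp (X + C (i : ℝ)) ≠ 0 := by
      rw [Ne, ← leadingCoeff_eq_zero, leadingCoeff_comp (by simp)]
      simp [hf0 j]
    rw [natDegree_mul (pow_ne_zero _ (X_add_C_ne_zero _)) hne, natDegree_pow, natDegree_comp, natDegree_X_add_C, natDegree_X_add_C]
    have := hdeg _ (hfL j)
    omega
  have hdA : ∀ i j, (A i j).natDegree ≤ K - 1 := by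
    intro i j
    simp only [hA, Matrix.of_apply]
    refine (natDegree_C_mul_le _ _).trans (hnd i j).le
  have hcoA : ∀ (i j : Fin c), (A i j).coeff (K - 1) = (P (f j)).leadingCoeff * (η ^ (f j)) ^ (i : ℕ) := by
    intro i j
    simp only [hA, Matrix.of_apply, coeff_C_mul]
    have hco : ∀ p : ℝ[X], p.natDegree = K - 1 → p.coeff (K - 1) = p.leadingCoeff := by
      intro p hp; rw [← hp]; rfl
    rw [hco _ (hnd i j), leadingCoeff_mul, leadingCoeff_pow,
      leadingCoeff_comp (by rw [natDegree_X_add_C]; exact one_ne_zero),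
      leadingCoeff_X_add_C, leadingCoeff_X_add_C, one_pow, one_pow, one_mul, mul_one,
      mul_comm, ← pow_mul, mul_comm (i : ℕ)]
  have hdet : A.det ≠ 0 := by
    intro h0
    have h1 := nz_coeff_det A (K - 1) hdA
    rw [h0, coeff_zero] at h1
    have h2 : (Matrix.of fun i j => (A i j).coeff (K - 1)) =
        (Matrix.of fun i j : Fin c => (P (f j)).leadingCoeff *
          (Matrix.vandermonde (fun j : Fin c => η ^ (f j))).transpose i j) := by
      ext i j
      simp only [Matrix.of_apply, Matrix.transpose_apply, Matrix.vandermonde_apply]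
      exact hcoA i j
    rw [h2, Matrix.det_mul_row, Matrix.det_transpose] at h1
    have h3 : (∏ i : Fin c, (P (f i)).leadingCoeff) ≠ 0 :=
      Finset.prod_ne_zero_iff.mpr fun i _ => by simpa using hf0 i
    have h4 : (Matrix.vandermonde (fun j : Fin c => η ^ (f j))).det ≠ 0 := by
      rw [Matrix.det_vandermonde_ne_zero_iff]
      intro a b hab
      exact f.injective (pow_right_injective₀ hη hη1 hab)
    exact (mul_ne_zero h3 h4) h1.symm
  have hdd := nz_natDegree_det A (K - 1) hdA
  -- zeros
  set Z : Finset ℝ := (Finset.range E ×ˢ Finset.range S).image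
    (fun x => ((x.1 + q * x.2 : ℕ) : ℝ)) with hZ
  have hZc : Z.card = E * S := by
    rw [hZ, Finset.card_image_of_injOn]
    · simp
    · rintro ⟨a, b⟩ hab ⟨a', b'⟩ hab' h
      simp at hab hab'
      have h : a + q * b = a' + q * b' := by
        simp only at h; exact_mod_cast h
      have ha : a < q := by omega
      have ha' : a' < q := by omega
      have e1 : (a + q * b) / q = b := by
        rw [Nat.add_mul_div_left _ _ (by omega), Nat.div_eq_of_lt ha, zero_add]
      have e2 : (a' + q * b') / q = b' := by
        rw [Nat.add_mul_div_left _ _ (by omega), Nat.div_eq_of_lt ha', zero_add]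
      have hb : b = b' := by rw [← e1, ← e2, h]
      subst hb
      have : a = a' := by omega
      rw [this]
  have hroot : ∀ z ∈ Z, A.det.eval z = 0 := by
    intro z hz
    simp only [hZ, Finset.mem_image, Finset.mem_product, Finset.mem_range, Prod.exists] at hz
    obtain ⟨e, t, ⟨he, ht⟩, rfl⟩ := hz
    set z : ℝ := ((e + q * t : ℕ) : ℝ) with hz
    have hz0 : z + 1 ≠ 0 := by positivity
    have h1 : A.det.eval z = ((evalRingHom z).mapMatrix A).det := by
      rw [← RingHom.map_det]; rfl
    rw [h1]
    rw [← Matrix.exists_mulVec_eq_zero_iff]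
    refine ⟨fun j => (η ^ e * κ ^ t) ^ (f j) / (z + 1) ^ (K - 1 - (P (f j)).natDegree), ?_, ?_⟩
    · intro h
      have := congrFun h ⟨0, hcpos⟩
      simp only [Pi.zero_apply] at this
      have hp : 0 < η ^ e * κ ^ t := by positivity
      exact (div_ne_zero (pow_ne_zero _ hp.ne') (pow_ne_zero _ hz0)) this
    · ext i
      simp only [Matrix.mulVec, dotProduct, RingHom.mapMatrix_apply, Matrix.map_apply, Pi.zero_apply]
      have hh := hv (e + i) (by have := i.2; omega) t ht
      rw [← Finset.sum_filter_of_ne (p := fun l => P l ≠ 0)] at hh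
      · have him : s = Finset.univ.image f := by
          ext x
          have := Finset.range_orderEmbOfFin s rfl
          simp only [Finset.mem_image, Finset.mem_univ, true_and]
          rw [← Set.mem_range]
          rw [hf, this]; simp
        rw [← hs, him, Finset.sum_image (fun a _ b _ h => f.injective h)] at hh
        rw [← hh]
        refine Finset.sum_congr rfl fun j _ => ?_
        simp only [hA, Matrix.of_apply, coe_evalRingHom, eval_mul, eval_C, eval_pow, eval_add,
          eval_X, eval_comp]
        have hzz : ((e + i + q * t : ℕ) : ℝ) = z + (i : ℕ) := by rw [hz]; push_cast; ring
        rw [hzz]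
        field_simp
        ring
      · intro l _ hne h0
        simp [h0] at hne
  have hle : Z.card ≤ A.det.natDegree := by
    have : Z.val ≤ A.det.roots := by
      rw [Finset.val_le_iff_val_subset]
      intro z hz
      rw [mem_roots hdet]
      exact hroot z (by simpa using hz)
    exact (Multiset.card_le_card this).trans (card_roots' _)
  rw [hZc] at hle
  have h5 : c * (K - 1) ≤ L * (K - 1) := Nat.mul_le_mul_right _ hcL
  have h6 : L * (K - 1) + L = K * L := by
    obtain ⟨k, rfl⟩ : ∃ k, K = k + 1 := ⟨K - 1, by omega⟩
    simp; ring
  have : 0 < L := by omega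
  omega

/-- `α` is the real root of `x³ = x² + 1` and `β` a complex one. -/
structure NzRoots (α : ℝ) (β : ℂ) : Prop where
  cube : α ^ 3 = α ^ 2 + 1
  lo : 1.46 < α
  hi : α < 1.47
  bre : β.re = (1 - α) / 2
  bim : β.re ^ 2 + β.im ^ 2 = α ^ 2 - α

theorem nz_exists_roots : ∃ α β, NzRoots α β := by
  have hc : ContinuousOn (fun x : ℝ => x ^ 3 - x ^ 2 - 1) (Set.Icc 1.46 1.47) := by fun_prop
  have h := intermediate_value_Ioo (by norm_num : (1.46 : ℝ) ≤ 1.47) hc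
  have h0 : (0 : ℝ) ∈ Set.Ioo ((1.46 : ℝ) ^ 3 - 1.46 ^ 2 - 1) (1.47 ^ 3 - 1.47 ^ 2 - 1) := by
    constructor <;> norm_num
  obtain ⟨α, ⟨h1, h2⟩, h3⟩ := h h0
  simp only at h3
  refine ⟨α, ⟨(1 - α) / 2, Real.sqrt (α ^ 2 - α - ((1 - α) / 2) ^ 2)⟩, by linarith, h1, h2, rfl, ?_⟩
  simp only
  rw [Real.sq_sqrt]
  · ring
  · nlinarith

theorem nz_descent : ∀ (m : ℕ) (a b c : ℤ), a.natAbs + b.natAbs + c.natAbs ≤ m →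
    a ^ 3 + b ^ 3 + c ^ 3 + a ^ 2 * b + a ^ 2 * c - 2 * a * c ^ 2 + b ^ 2 * c - 3 * a * b * c = 0 →
    a = 0 ∧ b = 0 ∧ c = 0 := by
  intro m
  induction m using Nat.strong_induction_on with
  | _ m ih =>
    intro a b c hm h
    have hz : ∀ x y z : ZMod 2, x ^ 3 + y ^ 3 + z ^ 3 + x ^ 2 * y + x ^ 2 * z - 2 * x * z ^ 2
        + y ^ 2 * z - 3 * x * y * z = 0 → x = 0 ∧ y = 0 ∧ z = 0 := by decide
    have h' := congrArg (Int.cast : ℤ → ZMod 2) h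
    push_cast at h'
    obtain ⟨ha, hb, hc⟩ := hz _ _ _ h'
    rw [ZMod.intCast_zmod_eq_zero_iff_dvd] at ha hb hc
    obtain ⟨a, rfl⟩ := ha
    obtain ⟨b, rfl⟩ := hb
    obtain ⟨c, rfl⟩ := hc
    push_cast at *
    by_cases h0 : a.natAbs + b.natAbs + c.natAbs = 0
    · omega
    · have := ih (a.natAbs + b.natAbs + c.natAbs) (by omega) a b c le_rfl (by
        have : 8 * (a ^ 3 + b ^ 3 + c ^ 3 + a ^ 2 * b + a ^ 2 * c - 2 * a * c ^ 2 + b ^ 2 * c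
          - 3 * a * b * c) = 0 := by linear_combination h
        simpa using this)
      omega

theorem nz_norm_eq {α : ℝ} {β : ℂ} (H : NzRoots α β) (a b c : ℝ) :
    (a + b * α + c * α ^ 2) * ‖(a + b * β + c * β ^ 2 : ℂ)‖ ^ 2 =
    a ^ 3 + b ^ 3 + c ^ 3 + a ^ 2 * b + a ^ 2 * c - 2 * a * c ^ 2 + b ^ 2 * c - 3 * a * b * c := by
  have h1 : ‖(a + b * β + c * β ^ 2 : ℂ)‖ ^ 2 =
      (a + b * β.re + c * (β.re ^ 2 - β.im ^ 2)) ^ 2 + (b * β.im + 2 * c * β.re * β.im) ^ 2 := by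
    rw [Complex.sq_norm, Complex.normSq_apply]
    simp [pow_two]
    ring
  have him := H.bim
  rw [H.bre] at h1 him
  have hy : β.im ^ 2 = α ^ 2 - α - ((1 - α) / 2) ^ 2 := by linarith
  have h2 : ‖(a + b * β + c * β ^ 2 : ℂ)‖ ^ 2 =
      a ^ 2 + b ^ 2 * (α ^ 2 - α) + c ^ 2 * (α ^ 2 - α) ^ 2 + a * b * (1 - α)
      + a * c * ((1 - α) ^ 2 - 2 * (α ^ 2 - α)) + b * c * (α ^ 2 - α) * (1 - α) := by
    rw [h1]
    have e : (b * β.im + 2 * c * ((1 - α) / 2) * β.im) ^ 2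
      = (b + 2 * c * ((1 - α) / 2)) ^ 2 * β.im ^ 2 := by ring
    rw [e, hy]; ring
  rw [h2]
  linear_combination (α ^ 3 * c ^ 3 - α ^ 2 * c ^ 3 - 2 * a * c ^ 2 - 3 * a * b * c + b ^ 3
    + b ^ 2 * c + c ^ 3) * H.cube

theorem nz_beta_cube {α : ℝ} {β : ℂ} (H : NzRoots α β) : β ^ 3 = β ^ 2 + 1 := by
  have him := H.bim
  have hre := H.bre
  have hα : α = 1 - 2 * β.re := by linarith
  have hc := H.cube
  have h1 : β ^ 2 - 2 * β.re * β + (β.re ^ 2 + β.im ^ 2 : ℝ) = 0 := by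
    apply Complex.ext <;> simp [pow_two] <;> ring
  rw [him] at h1
  have h3 : (α : ℂ) = 1 - 2 * β.re := by rw [hα]; push_cast; simp
  have h4 : (α : ℂ) ^ 3 = α ^ 2 + 1 := by exact_mod_cast hc
  push_cast at h1
  linear_combination (β - α) * h1 + h4 + (β ^ 2 - α * β) * h3

open Polynomial in
theorem nz_red {α : ℝ} {β : ℂ} (H : NzRoots α β) (p : ℤ[X]) :
    ∃ a b c : ℤ, aeval α p = (a + b * α + c * α ^ 2 : ℝ) ∧
      aeval β p = (((a : ℝ) : ℂ) + ((b : ℝ) : ℂ) * β + ((c : ℝ) : ℂ) * β ^ 2 : ℂ) := by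
  set f : ℤ[X] := X ^ 3 - X ^ 2 - 1 with hf
  have hm : f.Monic := by rw [hf]; monicity!
  have hd : f.natDegree = 3 := by rw [hf]; compute_degree!
  have hr : (p %ₘ f).natDegree < 3 := by
    rw [← hd]; apply natDegree_modByMonic_lt _ hm
    intro h; rw [h] at hd; simp at hd
  have hp := modByMonic_add_div p f
  refine ⟨(p %ₘ f).coeff 0, (p %ₘ f).coeff 1, (p %ₘ f).coeff 2, ?_, ?_⟩
  · have h0 : aeval α f = 0 := by simp [hf]; linarith [H.cube]
    conv_lhs => rw [← hp]
    rw [map_add, map_mul, h0, zero_mul, add_zero, aeval_eq_sum_range' hr]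
    simp [Finset.sum_range_succ]
  · have h0 : aeval β f = 0 := by simp [hf]; linear_combination nz_beta_cube H
    conv_lhs => rw [← hp]
    rw [map_add, map_mul, h0, zero_mul, add_zero, aeval_eq_sum_range' hr]
    simp [Finset.sum_range_succ]

open Polynomial in
theorem nz_conj {α : ℝ} {β : ℂ} (H : NzRoots α β) (p : ℤ[X]) (hp : aeval α p ≠ 0) :
    1 ≤ |aeval α p| * ‖aeval β p‖ ^ 2 := by
  obtain ⟨a, b, c, h1, h2⟩ := nz_red H p
  have h3 := nz_norm_eq H a b c
  rw [← h1, ← h2] at h3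
  set N : ℤ := a ^ 3 + b ^ 3 + c ^ 3 + a ^ 2 * b + a ^ 2 * c - 2 * a * c ^ 2 + b ^ 2 * c
    - 3 * a * b * c with hN
  have h4 : aeval α p * ‖aeval β p‖ ^ 2 = (N : ℝ) := by rw [h3, hN]; push_cast; ring
  have hN0 : N ≠ 0 := by
    intro h0
    obtain ⟨rfl, rfl, rfl⟩ := nz_descent _ a b c le_rfl h0
    simp at h1
    exact hp h1
  have h5 : |aeval α p| * ‖aeval β p‖ ^ 2 = |(N : ℝ)| := by
    rw [← h4, abs_mul, abs_of_nonneg (sq_nonneg ‖aeval β p‖)]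
  rw [h5]
  exact_mod_cast Int.one_le_abs hN0

open Polynomial in
theorem nz_conj_zero {α : ℝ} {β : ℂ} (H : NzRoots α β) (p : ℤ[X]) (hp : aeval α p = 0) :
    aeval β p = 0 := by
  obtain ⟨a, b, c, h1, h2⟩ := nz_red H p
  have h3 := nz_norm_eq H a b c
  rw [← h1, hp, zero_mul] at h3
  obtain ⟨rfl, rfl, rfl⟩ := nz_descent _ a b c le_rfl (by exact_mod_cast h3.symm)
  rw [h2]; simp

theorem nz_exp_tail (y G : ℝ) (hy : |y| ≤ G) (j : ℕ) :
    |Real.exp y - ∑ i ∈ Finset.range j, y ^ i / i.factorial| ≤ Real.exp (2 * G) * (1 / 2) ^ j := by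
  have h1 := Complex.norm_exp_sub_sum_le_exp_norm_sub_sum (y : ℂ) j
  have h2 : ‖Complex.exp y - ∑ m ∈ Finset.range j, (y : ℂ) ^ m / m.factorial‖ =
      |Real.exp y - ∑ i ∈ Finset.range j, y ^ i / i.factorial| := by
    rw [← Real.norm_eq_abs, ← Complex.norm_real]; push_cast; rfl
  rw [h2, Complex.norm_real, Real.norm_eq_abs] at h1
  refine h1.trans ?_
  set g := |y| with hg
  have hg0 : 0 ≤ g := abs_nonneg y
  have hs : ∀ x : ℝ, HasSum (fun i : ℕ => x ^ i / i.factorial) (Real.exp x) := by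
    intro x
    have := NormedSpace.expSeries_div_hasSum_exp (𝔸 := ℝ) x
    rwa [← Real.exp_eq_exp_ℝ] at this
  have e1 := (hs g).summable.sum_add_tsum_nat_add j
  rw [(hs g).tsum_eq] at e1
  have e2 := (hs (2 * g)).summable.sum_add_tsum_nat_add j
  rw [(hs (2 * g)).tsum_eq] at e2
  have s1 := (summable_nat_add_iff j).mpr (hs g).summable
  have s2 := (summable_nat_add_iff j).mpr (hs (2 * g)).summable
  have hle : ∑' i : ℕ, g ^ (i + j) / (i + j).factorial ≤
      (1 / 2) ^ j * ∑' i : ℕ, (2 * g) ^ (i + j) / (i + j).factorial := by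
    rw [← tsum_mul_left]
    refine s1.tsum_le_tsum (fun i => ?_) (s2.mul_left _)
    have : (1 / 2 : ℝ) ^ j * ((2 * g) ^ (i + j) / (i + j).factorial) =
       2 ^ i * (g ^ (i + j) / (i + j).factorial) := by
      rw [mul_pow, pow_add 2 i j, div_pow, one_pow]; field_simp
    rw [this]
    exact le_mul_of_one_le_left (by positivity) (one_le_pow₀ (by norm_num))
  have h0 : 0 ≤ ∑ i ∈ Finset.range j, (2 * g) ^ i / (i.factorial : ℝ) :=
    Finset.sum_nonneg fun i _ => by positivity
  have hG : Real.exp (2 * g) ≤ Real.exp (2 * G) := Real.exp_le_exp.mpr (by linarith)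
  have hp : (0 : ℝ) < (1 / 2) ^ j := by positivity
  have h3 : (1 / 2 : ℝ) ^ j * ∑' i : ℕ, (2 * g) ^ (i + j) / (i + j).factorial ≤
      (1 / 2) ^ j * Real.exp (2 * G) := mul_le_mul_of_nonneg_left (by linarith) hp.le
  linarith

theorem nz_pigeon {ι : Type} [Fintype ι] [DecidableEq ι] (W : ℕ) (hW : 2 ≤ W)
    (lam : Fin (10 * W) → ι → ℝ)
    (hb : ∀ m, ∑ i, |lam m i| ≤ 2 ^ W) (hN : 100 * W < Fintype.card ι) :
    ∃ p : ι → ℤ, p ≠ 0 ∧ (∀ i, |(p i : ℝ)| ≤ 2 ^ W) ∧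
      ∀ m, |∑ i, (p i : ℝ) * lam m i| ≤ (1 / 2) ^ (7 * W) := by
  classical
  set g : (ι → Fin (2 ^ W)) → (Fin (10 * W) → ℤ) := fun x m =>
    ⌊2 ^ (7 * W) * ∑ i, ((x i : ℕ) : ℝ) * lam m i⌋ with hg
  set B := Fintype.piFinset (fun _ : Fin (10 * W) => Finset.Icc (-(2 : ℤ) ^ (9 * W)) (2 ^ (9 * W)))
    with hB
  have hx : ∀ (x : ι → Fin (2 ^ W)) m, |∑ i, ((x i : ℕ) : ℝ) * lam m i| ≤ 2 ^ (2 * W) := by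
    intro x m
    calc |∑ i, ((x i : ℕ) : ℝ) * lam m i| ≤ ∑ i, |((x i : ℕ) : ℝ) * lam m i| :=
          Finset.abs_sum_le_sum_abs _ _
      _ ≤ ∑ i, 2 ^ W * |lam m i| := by
          refine Finset.sum_le_sum fun i _ => ?_
          rw [abs_mul, Nat.abs_cast]
          refine mul_le_mul_of_nonneg_right ?_ (abs_nonneg _)
          exact_mod_cast (x i).2.le
      _ ≤ 2 ^ W * 2 ^ W := by
          rw [← Finset.mul_sum]; exact mul_le_mul_of_nonneg_left (hb m) (by positivity)
      _ = 2 ^ (2 * W) := by ring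
  have hmap : ∀ x ∈ (Finset.univ : Finset (ι → Fin (2 ^ W))), g x ∈ B := by
    intro x _
    rw [hB, Fintype.mem_piFinset]
    intro m
    rw [Finset.mem_Icc]
    have h := abs_le.mp (hx x m)
    have hp : (0 : ℝ) < 2 ^ (7 * W) := by positivity
    have e : (2 : ℝ) ^ (9 * W) = 2 ^ (7 * W) * 2 ^ (2 * W) := by rw [← pow_add]; congr 1; ring
    constructor
    · rw [hg, Int.le_floor]; push_cast; rw [e]; nlinarith
    · have : ((g x m : ℤ) : ℝ) ≤ (2 ^ (9 * W) : ℤ) := by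
        refine (Int.floor_le _).trans ?_
        push_cast; rw [e]; nlinarith
      exact_mod_cast this
  have hcard : B.card < (Finset.univ : Finset (ι → Fin (2 ^ W))).card := by
    rw [hB, Fintype.card_piFinset, Finset.card_univ, Fintype.card_fun]
    simp only [Int.card_Icc, Finset.prod_const, Finset.card_univ, Fintype.card_fin]
    have h1 : (2 ^ (9 * W) + 1 - -(2 : ℤ) ^ (9 * W)).toNat ≤ 2 ^ (10 * W) := by
      rw [Int.toNat_le]
      push_cast
      have : (2 : ℤ) ^ (9 * W) * 2 ^ 2 ≤ 2 ^ (10 * W) := by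
        rw [← pow_add]; exact pow_le_pow_right₀ (by norm_num) (by omega)
      have : (1 : ℤ) ≤ 2 ^ (9 * W) := one_le_pow₀ (by norm_num)
      linarith
    calc _ ≤ (2 ^ (10 * W)) ^ (10 * W) := Nat.pow_le_pow_left h1 _
      _ = (2 ^ W) ^ (100 * W) := by rw [← pow_mul, ← pow_mul]; congr 1; ring
      _ < _ := Nat.pow_lt_pow_right (Nat.one_lt_two_pow (by omega)) hN
  obtain ⟨x, -, y, -, hxy, hgxy⟩ := Finset.exists_ne_map_eq_of_card_lt_of_maps_to hcard hmap
  refine ⟨fun i => ((x i : ℕ) : ℤ) - ((y i : ℕ) : ℤ), ?_, ?_, ?_⟩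
  · intro h
    apply hxy
    ext i
    have := congrFun h i
    simp at this
    omega
  · intro i
    have h1 : ((x i : ℕ) : ℝ) ≤ 2 ^ W := by exact_mod_cast (x i).2.le
    have h2 : ((y i : ℕ) : ℝ) ≤ 2 ^ W := by exact_mod_cast (y i).2.le
    have h3 : (0 : ℝ) ≤ ((x i : ℕ) : ℝ) := by positivity
    have h4 : (0 : ℝ) ≤ ((y i : ℕ) : ℝ) := by positivity
    push_cast
    rw [abs_le]; constructor <;> linarith
  · intro m
    have h := congrFun hgxy m
    simp only [hg] at h
    have h2 := Int.abs_sub_lt_one_of_floor_eq_floor h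
    rw [← mul_sub, ← Finset.sum_sub_distrib, abs_mul] at h2
    have e : ∑ i, ((((x i : ℕ) : ℤ) - ((y i : ℕ) : ℤ) : ℤ) : ℝ) * lam m i =
        ∑ i, (((x i : ℕ) : ℝ) * lam m i - ((y i : ℕ) : ℝ) * lam m i) := by
      refine Finset.sum_congr rfl fun i _ => ?_
      push_cast; ring
    rw [e, one_div, inv_pow, ← one_div, le_div_iff₀ (by positivity)]
    rw [abs_of_pos (by positivity)] at h2
    linarith

/-- Taylor coefficient functionals of the auxiliary function. -/
noncomputable def nzLam (T h : ℝ) (m k l : ℕ) : ℝ :=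
  if k ≤ m then T ^ k * ((l * h * T) ^ (m - k) / (m - k).factorial) else 0

theorem nz_pow_div_fact_le (x : ℝ) (hx : 0 ≤ x) (j : ℕ) : x ^ j / j.factorial ≤ Real.exp x := by
  have := Real.sum_le_exp_of_nonneg hx (j + 1)
  refine le_trans ?_ this
  refine Finset.single_le_sum (f := fun i => x ^ i / (i.factorial : ℝ)) (fun i _ => by positivity) ?_
  simp

theorem nz_lam_le (T h G : ℝ) (hT : 1 ≤ T) (m k l K L : ℕ) (hk : k < K) (hl : l < L)
    (hG : (L * T) * |h| ≤ G) : |nzLam T h m k l| ≤ T ^ K * Real.exp G := by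
  have hG0 : 0 ≤ G := le_trans (by positivity) hG
  unfold nzLam
  split_ifs with hkm
  · rw [abs_mul, abs_div, abs_pow, abs_pow, abs_of_nonneg (by linarith : 0 ≤ T), Nat.abs_cast]
    have h1 : T ^ k ≤ T ^ K := pow_le_pow_right₀ hT hk.le
    have h2 : |(l * h * T)| ≤ G := by
      rw [abs_mul, abs_mul, Nat.abs_cast, abs_of_nonneg (by linarith : 0 ≤ T)]
      refine le_trans ?_ hG
      have : (l : ℝ) ≤ L := by exact_mod_cast hl.le
      have h3 : (l : ℝ) * (|h| * T) ≤ L * (|h| * T) := mul_le_mul_of_nonneg_right this (by positivity)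
      linarith
    have h3 := nz_pow_div_fact_le |(l * h * T)| (abs_nonneg _) (m - k)
    have h4 : Real.exp |(l * h * T)| ≤ Real.exp G := Real.exp_le_exp.mpr h2
    exact mul_le_mul h1 (h3.trans h4) (by positivity) (by positivity)
  · rw [abs_zero]; positivity

theorem nz_lam_sum (T h z : ℝ) (hT : 0 < T) (J k l : ℕ) (hk : k ≤ J) :
    ∑ m ∈ Finset.range J, (z / T) ^ m * nzLam T h m k l =
      z ^ k * ∑ i ∈ Finset.range (J - k), (l * h * z) ^ i / i.factorial := by
  obtain ⟨j, rfl⟩ : ∃ j, J = k + j := ⟨J - k, by omega⟩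
  rw [Finset.sum_range_add, Finset.sum_eq_zero, zero_add, Finset.mul_sum]
  · simp only [Nat.add_sub_cancel_left]
    refine Finset.sum_congr rfl fun i _ => ?_
    unfold nzLam
    rw [if_pos (by omega), Nat.add_sub_cancel_left]
    rw [pow_add, div_pow, div_pow, mul_pow _ T, mul_pow _ z]
    field_simp
  · intro m hm
    unfold nzLam
    rw [if_neg (by simp at hm; omega), mul_zero]

theorem nz_entry (K L S q W : ℕ) (η κ ν G T : ℝ)
    (hη : 0 < η) (hT : T = q * S) (hT1 : 1 ≤ T) (hKW : K ≤ W)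
    (hκ : κ = η ^ q * ν) (hν : ∀ i ≤ S * L, |ν ^ i - 1| ≤ (1 / 2) ^ (8 * W))
    (hG : L * T * |Real.log η| ≤ G) (e s k l : ℕ) (hes : e + q * s ≤ q * S) (hs : s < S)
    (hk : k < K) (hl : l < L) :
    |((e + q * s : ℕ) : ℝ) ^ k * (η ^ e * κ ^ s) ^ l -
      ∑ m ∈ Finset.range (10 * W), (((e + q * s : ℕ) : ℝ) / T) ^ m * nzLam T (Real.log η) m k l| ≤
      T ^ K * Real.exp (4 * G) * ((1 / 2) ^ (9 * W) + (1 / 2) ^ (8 * W)) := by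
  set z : ℝ := ((e + q * s : ℕ) : ℝ) with hz
  have hz0 : 0 ≤ z := by positivity
  have hzT : z ≤ T := by rw [hz, hT]; exact_mod_cast hes
  have hG0 : 0 ≤ G := le_trans (by positivity) hG
  rw [nz_lam_sum T _ z (by linarith) _ k l (by omega)]
  set y : ℝ := l * Real.log η * z with hy
  have hyG : |y| ≤ G := by
    rw [hy, abs_mul, abs_mul, Nat.abs_cast, abs_of_nonneg hz0]
    refine le_trans ?_ hG
    have h1 : (l : ℝ) ≤ L := by exact_mod_cast hl.le
    have h3 : (l : ℝ) * z ≤ L * T := mul_le_mul h1 hzT hz0 (by positivity)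
    have := mul_le_mul_of_nonneg_right h3 (abs_nonneg (Real.log η))
    linarith
  have hexp : (η ^ e * κ ^ s) ^ l = Real.exp y * ν ^ (s * l) := by
    have : Real.exp y = η ^ (l * (e + q * s)) := by
      rw [hy, hz, mul_comm (l : ℝ), mul_assoc, ← Nat.cast_mul, mul_comm, Real.exp_nat_mul, Real.exp_log hη]
    rw [this, hκ]
    ring
  rw [hexp]
  have ht := nz_exp_tail y G hyG (10 * W - k)
  have hn := hν (s * l) (Nat.mul_le_mul hs.le hl.le)
  have hzk : z ^ k ≤ T ^ K :=
    (pow_le_pow_left₀ hz0 hzT k).trans (pow_le_pow_right₀ hT1 hk.le)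
  have hzk0 : 0 ≤ z ^ k := by positivity
  set tay := ∑ i ∈ Finset.range (10 * W - k), y ^ i / (i.factorial : ℝ)
  have e1 : z ^ k * (Real.exp y * ν ^ (s * l)) - z ^ k * tay =
      z ^ k * ((Real.exp y - tay) + Real.exp y * (ν ^ (s * l) - 1)) := by ring
  rw [e1, abs_mul, abs_of_nonneg hzk0, mul_assoc]
  refine mul_le_mul hzk ?_ (abs_nonneg _) (by positivity)
  refine (abs_add_le _ _).trans ?_
  rw [mul_add, abs_mul, abs_of_pos (Real.exp_pos y)]
  refine add_le_add (ht.trans ?_) ?_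
  · refine mul_le_mul (Real.exp_le_exp.mpr (by linarith)) ?_ (by positivity) (by positivity)
    exact pow_le_pow_of_le_one (by norm_num) (by norm_num) (by omega)
  · refine mul_le_mul (Real.exp_le_exp.mpr ?_) hn (abs_nonneg _) (by positivity)
    linarith [le_abs_self y]

open Polynomial in
theorem nz_core {α : ℝ} {β : ℂ} (H : NzRoots α β) (K L E S q W H0 Den : ℕ) (η κ ν G : ℝ)
    (hK : 1 ≤ K) (hW : 5 ≤ W) (hT : 2 ≤ q * S)
    (hη : 0 < η) (hη1 : η ≠ 1) (hκ0 : 0 < κ) (hE : E + L ≤ q) (hES : K * L ≤ E * S)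
    (hκ : κ = η ^ q * ν) (hν : ∀ i ≤ S * L, |ν ^ i - 1| ≤ (1 / 2) ^ (8 * W))
    (hG : (L * (q * S)) * |Real.log η| ≤ G)
    (Num : ℕ → ℕ → ℤ[X]) (hDen : 1 ≤ Den) (hDH : Den ≤ H0)
    (hNum : ∀ e < E + L, ∀ s < S, aeval α (Num e s) = Den * (η ^ e * κ ^ s))
    (hNumβ : ∀ e < E + L, ∀ s < S, ‖aeval β (Num e s)‖ ≤ H0)
    (hB : ((K * L : ℕ) : ℝ) * (q * S) ^ K * H0 ^ L * Real.exp (4 * G) ≤ 2 ^ W)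
    (hN : 100 * W < K * L) : False := by
  classical
  set T : ℝ := q * S with hTdef
  have hT2 : (2 : ℝ) ≤ T := by rw [hTdef]; exact_mod_cast hT
  have hH1 : (1 : ℝ) ≤ H0 := by exact_mod_cast hDen.trans hDH
  have hG0 : 0 ≤ G := le_trans (by positivity) hG
  have hex1 : 1 ≤ Real.exp (4 * G) := Real.one_le_exp (by linarith)
  have hKL1 : (1 : ℝ) ≤ ((K * L : ℕ) : ℝ) := by exact_mod_cast (by omega : 1 ≤ K * L)
  have hHL1 : (1 : ℝ) ≤ (H0 : ℝ) ^ L := one_le_pow₀ hH1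
  have hTK1 : (1 : ℝ) ≤ T ^ K := one_le_pow₀ (by linarith)
  have hB1 : ((K * L : ℕ) : ℝ) * T ^ K * Real.exp (4 * G) ≤ 2 ^ W := by
    refine le_trans ?_ hB
    have : ((K * L : ℕ) : ℝ) * T ^ K * Real.exp (4 * G) ≤
      (((K * L : ℕ) : ℝ) * T ^ K * Real.exp (4 * G)) * (H0 : ℝ) ^ L :=
      le_mul_of_one_le_right (by positivity) hHL1
    linarith
  have hB2 : ((K * L : ℕ) : ℝ) * T ^ K * (H0 : ℝ) ^ L ≤ 2 ^ W :=
    le_trans (le_mul_of_one_le_right (by positivity) hex1) hB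
  have hKW : K ≤ W := by
    have h1 : T ^ K ≤ 2 ^ W := by
      refine le_trans ?_ hB2
      have h2 : T ^ K ≤ ((K * L : ℕ) : ℝ) * T ^ K := le_mul_of_one_le_left (by positivity) hKL1
      exact h2.trans (le_mul_of_one_le_right (by positivity) hHL1)
    have h2 : (2 : ℝ) ^ K ≤ 2 ^ W := (pow_le_pow_left₀ (by norm_num) hT2 K).trans h1
    exact (pow_le_pow_iff_right₀ (by norm_num)).mp h2
  -- the auxiliary polynomial
  have hcardι : Fintype.card (Fin K × Fin L) = K * L := by simp
  obtain ⟨p, hp0, hpb, hps⟩ := nz_pigeon (ι := Fin K × Fin L) W (by omega)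
    (fun m i => nzLam T (Real.log η) m i.1 i.2) (by
      intro m
      refine (Finset.sum_le_card_nsmul _ _ (T ^ K * Real.exp G) fun i _ =>
        nz_lam_le T _ G (by linarith) m _ _ K L i.1.2 i.2.2 hG).trans ?_
      rw [Finset.card_univ, hcardι, nsmul_eq_mul, ← mul_assoc]
      refine le_trans ?_ hB1
      exact mul_le_mul_of_nonneg_left (Real.exp_le_exp.mpr (by linarith)) (by positivity))
    (by rw [hcardι]; exact hN)
  have hv : ∀ e < E + L, ∀ s < S,
      ∑ i : Fin K × Fin L, (p i : ℝ) * (((e + q * s : ℕ) : ℝ) ^ (i.1 : ℕ) * (η ^ e * κ ^ s) ^ (i.2 : ℕ)) = 0 := by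
    intro e he s hs
    have hes : e + q * s ≤ q * S := by
      have : q * s + q ≤ q * S := by rw [← Nat.mul_succ]; exact Nat.mul_le_mul_left _ hs
      omega
    set z : ℝ := ((e + q * s : ℕ) : ℝ) with hz
    have hz0 : 0 ≤ z := by positivity
    have hzT : z ≤ T := by rw [hz, hTdef]; exact_mod_cast hes
    by_contra hne
    set V := ∑ i : Fin K × Fin L, (p i : ℝ) * (z ^ (i.1 : ℕ) * (η ^ e * κ ^ s) ^ (i.2 : ℕ)) with hV
    -- upper bound
    set w : ℝ := (1 / 2) ^ W with hw
    have hw0 : 0 < w := by positivity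
    have hw5 : w ≤ 1 / 32 := by
      have : w ≤ (1 / 2) ^ 5 := pow_le_pow_of_le_one (by norm_num) (by norm_num) hW
      linarith
    have hw2 : w * 2 ^ W = 1 := by rw [hw, ← mul_pow]; norm_num
    have hwp : ∀ j : ℕ, (1 / 2 : ℝ) ^ (j * W) = w ^ j := by
      intro j; rw [hw, ← pow_mul]; congr 1; ring
    have hWw : (W : ℝ) * w ≤ 1 := by
      rw [← hw2, mul_comm]
      refine mul_le_mul_of_nonneg_left ?_ hw0.le
      exact_mod_cast (Nat.lt_two_pow_self (n := W)).le
    have hup : |V| ≤ 10 * W * w ^ 7 + 2 ^ W * 2 ^ W * (w ^ 9 + w ^ 8) := by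
      set M1 := ∑ m ∈ Finset.range (10 * W), (z / T) ^ m *
        ∑ i : Fin K × Fin L, (p i : ℝ) * nzLam T (Real.log η) m i.1 i.2 with hM1
      have h1 : |M1| ≤ 10 * W * w ^ 7 := by
        refine (Finset.abs_sum_le_sum_abs _ _).trans ?_
        refine (Finset.sum_le_card_nsmul _ _ (w ^ 7) fun m hm => ?_).trans ?_
        · rw [abs_mul, abs_of_nonneg (by positivity), ← hwp]
          have h2 := hps ⟨m, by simpa using hm⟩
          have h3 : (z / T) ^ m ≤ 1 := pow_le_one₀ (by positivity) ((div_le_one (by linarith)).mpr hzT)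
          calc _ ≤ 1 * _ := mul_le_mul_of_nonneg_right h3 (abs_nonneg _)
            _ ≤ _ := by rw [one_mul]; exact h2
        · rw [Finset.card_range, nsmul_eq_mul]; push_cast; exact le_rfl
      have h2 : M1 = ∑ i : Fin K × Fin L, (p i : ℝ) * ∑ m ∈ Finset.range (10 * W),
          (z / T) ^ m * nzLam T (Real.log η) m i.1 i.2 := by
        rw [hM1]
        simp only [Finset.mul_sum]
        rw [Finset.sum_comm]
        refine Finset.sum_congr rfl fun i _ => Finset.sum_congr rfl fun m _ => by ring
      have h3 : |V - M1| ≤ 2 ^ W * 2 ^ W * (w ^ 9 + w ^ 8) := by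
        rw [h2, hV, ← Finset.sum_sub_distrib]
        refine (Finset.abs_sum_le_sum_abs _ _).trans ?_
        refine (Finset.sum_le_card_nsmul _ _
          (2 ^ W * (T ^ K * Real.exp (4 * G) * (w ^ 9 + w ^ 8))) fun i hi => ?_).trans ?_
        · rw [← mul_sub, abs_mul]
          refine mul_le_mul (hpb i) ?_ (abs_nonneg _) (by positivity)
          rw [← hwp, ← hwp]
          exact nz_entry K L S q W η κ ν G T hη hTdef (by linarith) hKW hκ hν hG e s i.1 i.2
            hes hs i.1.2 i.2.2
        · rw [Finset.card_univ, hcardι, nsmul_eq_mul]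
          have := mul_le_mul_of_nonneg_right hB1 (by positivity : 0 ≤ 2 ^ W * (w ^ 9 + w ^ 8))
          linarith
      have h4 : |V| ≤ |V - M1| + |M1| := by
        have := abs_add_le (V - M1) M1
        simpa using this
      linarith
    have hup2 : |V| < w ^ 5 := by
      refine hup.trans_lt ?_
      have e1 : (2 : ℝ) ^ W * 2 ^ W * (w ^ 9 + w ^ 8) = (w * 2 ^ W) ^ 2 * (w ^ 7 + w ^ 6) := by ring
      rw [e1, hw2]
      have e2 : 10 * W * w ^ 7 = 10 * (W * w) * w ^ 6 := by ring
      rw [e2]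
      have h5 : 10 * (W * w) * w ^ 6 ≤ 10 * 1 * w ^ 6 :=
        mul_le_mul_of_nonneg_right (by linarith) (by positivity)
      have h6 : w ^ 6 ≤ 1 / 32 * w ^ 5 := by
        rw [pow_succ w 5, mul_comm]; exact mul_le_mul_of_nonneg_right hw5 (by positivity)
      have h7 : w ^ 7 ≤ 1 / 32 * w ^ 6 := by
        rw [pow_succ w 6, mul_comm]; exact mul_le_mul_of_nonneg_right hw5 (by positivity)
      have h8 : 0 < w ^ 5 := by positivity
      linarith
    -- lower bound
    set A : ℤ[X] := ∑ i : Fin K × Fin L, C (p i * ((e + q * s : ℕ) : ℤ) ^ (i.1 : ℕ)) *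
      (Num e s ^ (i.2 : ℕ) * C ((Den : ℤ) ^ (L - (i.2 : ℕ)))) with hA
    have hAα : aeval α A = Den ^ L * V := by
      rw [hA, hV, map_sum, Finset.mul_sum]
      refine Finset.sum_congr rfl fun i _ => ?_
      rw [map_mul (aeval α), map_mul (aeval α), map_pow (aeval α), hNum e he s hs, aeval_C, aeval_C]
      have hL : (Den : ℝ) ^ L = Den ^ (i.2 : ℕ) * Den ^ (L - (i.2 : ℕ)) := by
        rw [← pow_add]; congr 1; have := i.2.2; omega
      rw [hL, hz, mul_pow (Den : ℝ)]
      simp only [algebraMap_int_eq, eq_intCast]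
      push_cast
      ring
    have hAβ : ‖aeval β A‖ ≤ 2 ^ W * 2 ^ W := by
      rw [hA, map_sum]
      refine (norm_sum_le _ _).trans ?_
      refine (Finset.sum_le_card_nsmul _ _ (2 ^ W * T ^ K * (H0 : ℝ) ^ L) fun i hi => ?_).trans ?_
      · rw [map_mul (aeval β), map_mul (aeval β), map_pow (aeval β), aeval_C, aeval_C, norm_mul, norm_mul, norm_pow]
        simp only [algebraMap_int_eq, eq_intCast]
        push_cast
        rw [norm_mul, norm_pow, norm_pow, Complex.norm_intCast, Complex.norm_natCast]
        have e3 : ‖((e : ℂ) + q * s)‖ = z := by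
          rw [hz, ← Complex.norm_natCast]; push_cast; rfl
        rw [e3]
        have hL : (H0 : ℝ) ^ L = H0 ^ (i.2 : ℕ) * H0 ^ (L - (i.2 : ℕ)) := by
          rw [← pow_add]; congr 1; have := i.2.2; omega
        rw [hL]
        have hzk : z ^ (i.1 : ℕ) ≤ T ^ K :=
          (pow_le_pow_left₀ hz0 hzT _).trans (pow_le_pow_right₀ (by linarith) i.1.2.le)
        have hDH' : (Den : ℝ) ≤ H0 := by exact_mod_cast hDH
        refine mul_le_mul ?_ ?_ (by positivity) (by positivity)
        · exact mul_le_mul (hpb i) hzk (by positivity) (by positivity)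
        · exact mul_le_mul (pow_le_pow_left₀ (norm_nonneg _) (hNumβ e he s hs) _)
            (pow_le_pow_left₀ (by positivity) hDH' _) (by positivity) (by positivity)
      · rw [Finset.card_univ, hcardι, nsmul_eq_mul]
        have := mul_le_mul_of_nonneg_left hB2 (by positivity : (0 : ℝ) ≤ 2 ^ W)
        linarith
    have hDen0 : (0 : ℝ) < (Den : ℝ) ^ L := by positivity
    have hlow := nz_conj H A (by rw [hAα]; exact mul_ne_zero hDen0.ne' hne)
    rw [hAα, abs_mul, abs_of_pos hDen0] at hlow
    have hDL : (Den : ℝ) ^ L ≤ 2 ^ W := by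
      have h1 : (Den : ℝ) ^ L ≤ (H0 : ℝ) ^ L :=
        pow_le_pow_left₀ (by positivity) (by exact_mod_cast hDH) _
      refine h1.trans (le_trans ?_ hB2)
      exact le_mul_of_one_le_left (by positivity) (one_le_mul_of_one_le_of_one_le hKL1 hTK1)
    have h9 : ‖aeval β A‖ ^ 2 ≤ (2 ^ W * 2 ^ W) ^ 2 := pow_le_pow_left₀ (norm_nonneg _) hAβ 2
    have h10 : (Den : ℝ) ^ L * |V| < 2 ^ W * w ^ 5 :=
      mul_lt_mul' hDL hup2 (abs_nonneg _) (by positivity)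
    have h11 : (Den : ℝ) ^ L * |V| * ‖aeval β A‖ ^ 2 < 1 := by
      calc _ ≤ (Den : ℝ) ^ L * |V| * (2 ^ W * 2 ^ W) ^ 2 :=
            mul_le_mul_of_nonneg_left h9 (by positivity)
        _ < 2 ^ W * w ^ 5 * (2 ^ W * 2 ^ W) ^ 2 := mul_lt_mul_of_pos_right h10 (by positivity)
        _ = (w * 2 ^ W) ^ 5 := by ring
        _ = 1 := by rw [hw2, one_pow]
    linarith
  -- zero estimate
  set P : ℕ → ℝ[X] := fun l => if hl : l < L then
    ∑ k : Fin K, C ((p (k, ⟨l, hl⟩) : ℤ) : ℝ) * X ^ (k : ℕ) else 0 with hP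
  have hzero := nz_zero_estimate K L E S q hK P (by
      intro l hl
      simp only [hP, dif_pos hl]
      refine lt_of_le_of_lt (natDegree_sum_le_of_forall_le (n := K - 1) _ _ fun k _ => ?_) (by omega)
      exact (natDegree_C_mul_X_pow_le _ _).trans (by have := k.2; omega)) η κ hη hη1 hκ0 (by omega) hES (by
      intro e he s hs
      rw [← hv e he s hs, Fintype.sum_prod_type, Finset.sum_comm, Finset.sum_range]
      refine Finset.sum_congr rfl fun l _ => ?_
      simp only [hP, dif_pos l.2, eval_finsetSum, Finset.sum_mul]
      refine Finset.sum_congr rfl fun k _ => ?_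
      simp
      ring)
  apply hp0
  ext ⟨k, l⟩
  have h1 := hzero l l.2
  simp only [hP, dif_pos l.2] at h1
  have h2 := congrArg (fun f => f.coeff (k : ℕ)) h1
  simp only [finsetSum_coeff, coeff_C_mul, coeff_X_pow, coeff_zero] at h2
  rw [Finset.sum_eq_single k] at h2
  · simpa using h2
  · intro b _ hb
    rw [if_neg (fun h => hb (Fin.ext h.symm)), mul_zero]
  · simp

theorem nz_nu_pow (ν x : ℝ) (hx1 : x ≤ 1) (hν : |ν - 1| ≤ x) (i : ℕ) :
    |ν ^ i - 1| ≤ (2 ^ i - 1) * x := by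
  induction i with
  | zero => simp
  | succ i ih =>
    have h1 : ν ^ (i + 1) - 1 = ν * (ν ^ i - 1) + (ν - 1) := by ring
    have h2 : |ν| ≤ 2 := by
      have := abs_le.mp hν
      rw [abs_le]; constructor <;> linarith
    rw [h1]
    refine (abs_add_le _ _).trans ?_
    rw [abs_mul]
    have h3 : |ν| * |ν ^ i - 1| ≤ 2 * ((2 ^ i - 1) * x) :=
      mul_le_mul h2 ih (abs_nonneg _) (by norm_num)
    rw [pow_succ]
    linarith

theorem nz_tau_pow (t : ℕ) (ht : 2 ^ 100 ≤ t) : t ^ 80 ≤ 2 ^ t := by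
  set k := Nat.log 2 t with hk
  have h1 : 2 ^ k ≤ t := Nat.pow_log_le_self 2 (by omega)
  have h2 : t < 2 ^ (k + 1) := Nat.lt_pow_succ_log_self (by norm_num) t
  have h3 : 100 ≤ k := Nat.le_log_of_pow_le (by norm_num) ht
  have h4 : ∀ j : ℕ, 80 * (100 + j + 1) ≤ 2 ^ (100 + j) := by
    intro j
    induction j with
    | zero => norm_num
    | succ j ih =>
      rw [← add_assoc, pow_succ]; omega
  obtain ⟨j, hj⟩ : ∃ j, k = 100 + j := ⟨k - 100, by omega⟩
  have h5 := h4 j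
  rw [← hj] at h5
  calc t ^ 80 ≤ (2 ^ (k + 1)) ^ 80 := Nat.pow_le_pow_left h2.le _
    _ = 2 ^ (80 * (k + 1)) := by rw [← pow_mul]; congr 1; ring
    _ ≤ 2 ^ t := Nat.pow_le_pow_right (by norm_num) (h5.trans h1)

/-- Purely arithmetic facts about the parameters. -/
theorem nz_params (t n a q u R Y : ℕ) (ht : 2 ^ 100 ≤ t) (hn1 : t ^ 20 ≤ n) (hn2 : n ≤ 2 * t ^ 20)
    (hu : u ≤ t) (ha1 : 1 ≤ a) (ha : a ≤ t ^ 6) (hq : q = n / a)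
    (hR : R = q / t ^ 6 + a + 2) (hY : Y = u + R + a) :
    ∃ E S : ℕ, E + 201 * t ≤ q ∧ t ^ 16 * (201 * t) ≤ E * S ∧ 1 ≤ S ∧ S ≤ t ^ 16 ∧
      10000 * (a * (E + 201 * t)) ≤ 2 * t ^ 16 ∧ 10000 * (Y * S) ≤ t ^ 16 := by
  have ht0 : 0 < t := by omega
  have hb : ∀ i : ℕ, 2 ^ 100 * t ^ i ≤ t ^ (i + 1) := fun i => by
    rw [pow_succ, mul_comm]; exact Nat.mul_le_mul_left _ ht
  have haq : a * q ≤ n := by rw [hq]; exact Nat.mul_div_le n a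
  have haY : a * Y ≤ 3 * t ^ 14 := by
    have h1 : t ^ 6 * (q / t ^ 6) ≤ q := Nat.mul_div_le q _
    have h2 : t ^ 6 * (a * (q / t ^ 6)) ≤ t ^ 6 * (2 * t ^ 14) := by
      calc t ^ 6 * (a * (q / t ^ 6)) = a * (t ^ 6 * (q / t ^ 6)) := by ring
        _ ≤ a * q := Nat.mul_le_mul_left _ h1
        _ ≤ n := haq
        _ ≤ _ := by rw [show t ^ 6 * (2 * t ^ 14) = 2 * t ^ 20 by ring]; exact hn2
    have h3 : a * (q / t ^ 6) ≤ 2 * t ^ 14 := Nat.le_of_mul_le_mul_left h2 (by positivity)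
    have h4 : a * Y = a * (q / t ^ 6) + a * (2 * a + 2 + u) := by rw [hY, hR]; ring
    have h5 : a * (2 * a + 2 + u) ≤ t ^ 6 * (2 * t ^ 6 + 2 + t) :=
      Nat.mul_le_mul ha (by omega)
    have h6 : t ^ 6 * (2 * t ^ 6 + 2 + t) = 2 * t ^ 12 + 2 * t ^ 6 + t ^ 7 := by ring
    have : 2 ^ 100 * t ^ 6 ≤ t ^ 7 := hb 6; have : 2 ^ 100 * t ^ 7 ≤ t ^ 8 := hb 7; have : 2 ^ 100 * t ^ 8 ≤ t ^ 9 := hb 8; have : 2 ^ 100 * t ^ 9 ≤ t ^ 10 := hb 9; have : 2 ^ 100 * t ^ 10 ≤ t ^ 11 := hb 10; have : 2 ^ 100 * t ^ 11 ≤ t ^ 12 := hb 11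
    have : 2 ^ 100 * t ^ 12 ≤ t ^ 13 := hb 12; have : 2 ^ 100 * t ^ 13 ≤ t ^ 14 := hb 13
    omega
  have hY1 : 1 ≤ Y := by omega
  have hY14 : Y ≤ 3 * t ^ 14 := le_trans (Nat.le_mul_of_pos_left Y ha1) haY
  refine ⟨t ^ 16 / (10000 * a), t ^ 16 / (10000 * Y), ?_⟩
  set E := t ^ 16 / (10000 * a) with hE
  set S := t ^ 16 / (10000 * Y) with hS
  have hE1 : 10000 * a * E ≤ t ^ 16 := Nat.mul_div_le _ _
  have hS1 : 10000 * Y * S ≤ t ^ 16 := Nat.mul_div_le _ _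
  have : 2 ^ 100 * t ^ 6 ≤ t ^ 7 := hb 6; have : 2 ^ 100 * t ^ 7 ≤ t ^ 8 := hb 7; have : 2 ^ 100 * t ^ 8 ≤ t ^ 9 := hb 8; have : 2 ^ 100 * t ^ 9 ≤ t ^ 10 := hb 9; have : 2 ^ 100 * t ^ 10 ≤ t ^ 11 := hb 10; have : 2 ^ 100 * t ^ 11 ≤ t ^ 12 := hb 11
  have : 2 ^ 100 * t ^ 12 ≤ t ^ 13 := hb 12; have : 2 ^ 100 * t ^ 13 ≤ t ^ 14 := hb 13; have : 2 ^ 100 * t ^ 14 ≤ t ^ 15 := hb 14; have : 2 ^ 100 * t ^ 15 ≤ t ^ 16 := hb 15; have : 2 ^ 100 * t ^ 16 ≤ t ^ 17 := hb 16; have : 2 ^ 100 * t ^ 17 ≤ t ^ 18 := hb 17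
  have : 2 ^ 100 * t ^ 18 ≤ t ^ 19 := hb 18; have : 2 ^ 100 * t ^ 19 ≤ t ^ 20 := hb 19
  have hEp : 1 ≤ E := by
    rw [hE, Nat.le_div_iff_mul_le (by positivity)]; omega
  have hSp : 1 ≤ S := by
    rw [hS, Nat.le_div_iff_mul_le (by positivity)]; omega
  have hE2 : t ^ 16 ≤ 20000 * a * E := by
    have h := Nat.lt_mul_div_succ (t ^ 16) (by positivity : 0 < 10000 * a)
    rw [← hE] at h
    have : 10000 * a * (E + 1) ≤ 10000 * a * (2 * E) := Nat.mul_le_mul_left _ (by omega)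
    linarith
  have hS2 : t ^ 16 ≤ 20000 * Y * S := by
    have h := Nat.lt_mul_div_succ (t ^ 16) (by positivity : 0 < 10000 * Y)
    rw [← hS] at h
    have : 10000 * Y * (S + 1) ≤ 10000 * Y * (2 * S) := Nat.mul_le_mul_left _ (by omega)
    linarith
  have haL : a * (201 * t) ≤ 201 * t ^ 7 := by
    calc a * (201 * t) ≤ t ^ 6 * (201 * t) := Nat.mul_le_mul_right _ ha
      _ = _ := by ring
  refine ⟨?_, ?_, hSp, ?_, ?_, ?_⟩
  · rw [hq, Nat.le_div_iff_mul_le ha1]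
    have : (E + 201 * t) * a = a * E + a * (201 * t) := by ring
    have : 10000 * a * E = 10000 * (a * E) := by ring
    omega
  · have h1 : t ^ 16 * t ^ 16 ≤ (20000 * a * E) * (20000 * Y * S) := Nat.mul_le_mul hE2 hS2
    have h2 : (20000 * a * E) * (20000 * Y * S) = 400000000 * (a * Y) * (E * S) := by ring
    have h3 : 400000000 * (a * Y) * (E * S) ≤ 400000000 * (3 * t ^ 14) * (E * S) :=
      Nat.mul_le_mul_right _ (Nat.mul_le_mul_left _ haY)
    have h4 : t ^ 14 * t ^ 18 ≤ t ^ 14 * (1200000000 * (E * S)) := by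
      calc t ^ 14 * t ^ 18 = t ^ 16 * t ^ 16 := by ring
        _ ≤ _ := h1
        _ = _ := h2
        _ ≤ _ := h3
        _ = _ := by ring
    have h5 : t ^ 18 ≤ 1200000000 * (E * S) := Nat.le_of_mul_le_mul_left h4 (by positivity)
    have h6 : t ^ 16 * (201 * t) = 201 * t ^ 17 := by ring
    rw [h6]
    omega
  · calc S ≤ 10000 * Y * S := Nat.le_mul_of_pos_left _ (by positivity)
      _ ≤ _ := hS1
  · have : a * (E + 201 * t) = a * E + a * (201 * t) := by ring
    have : 10000 * a * E = 10000 * (a * E) := by ring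
    omega
  · rw [← mul_assoc]; exact hS1

theorem nz_beta_norm {α : ℝ} {β : ℂ} (H : NzRoots α β) : ‖β‖ < 1 := by
  have h1 : ‖β‖ ^ 2 = α ^ 2 - α := by
    rw [Complex.sq_norm, Complex.normSq_apply, ← H.bim]; ring
  have h2 := H.lo
  have h3 := H.hi
  have : ‖β‖ ^ 2 < 1 := by rw [h1]; nlinarith
  nlinarith [norm_nonneg β]

theorem nz_log10 : 0 < Real.log 10 ∧ Real.log 10 < 3 := by
  refine ⟨Real.log_pos (by norm_num), ?_⟩
  rw [Real.log_lt_iff_lt_exp (by norm_num)]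
  have h := Real.exp_one_gt_d9
  have h2 : Real.exp 3 = Real.exp 1 ^ 3 := by rw [← Real.exp_nat_mul]; norm_num
  rw [h2]
  have : (2.7 : ℝ) ^ 3 < Real.exp 1 ^ 3 := pow_lt_pow_left₀ (by linarith) (by norm_num) (by norm_num)
  norm_num at this
  linarith

open Polynomial in
theorem nz_eta_ne {α : ℝ} {β : ℂ} (H : NzRoots α β) (a b : ℕ) (ha : 1 ≤ a) :
    α ^ a ≠ 10 ^ b := by
  intro h
  have h1 := nz_conj_zero H (X ^ a - C ((10 : ℤ) ^ b)) (by
    rw [map_sub, map_pow, aeval_X, aeval_C, h]; simp)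
  rw [map_sub, map_pow, aeval_X, aeval_C] at h1
  have h2 : β ^ a = 10 ^ b := by
    have := sub_eq_zero.mp h1
    rw [this]; simp
  have h3 := congrArg norm h2
  rw [norm_pow, norm_pow] at h3
  have h4 : ‖β‖ ^ a < 1 := pow_lt_one₀ (norm_nonneg _) (nz_beta_norm H) (by omega)
  have h5 : (1 : ℝ) ≤ ‖(10 : ℂ)‖ ^ b := one_le_pow₀ (by norm_num)
  linarith

open Polynomial in
/-- The integer polynomial clearing denominators at the point `(e, s)`. -/
noncomputable def nzNum (a b r u p R E S e s : ℕ) : ℤ[X] :=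
  X ^ (a * e) * C ((10 : ℤ) ^ (b * (E - e))) *
    ((C (9 * 10 ^ u - 1 : ℤ) * (C 3 * X - C 2) * (X ^ 2 - X) ^ r * C ((10 : ℤ) ^ p)) ^ s *
      C ((9 * 10 ^ (u + R) : ℤ) ^ (S - s)))

open Polynomial in
theorem nz_num_alpha (α : ℝ) (a b r u p R E S e s : ℕ) (he : e ≤ E) (hs : s ≤ S)
    (η κ : ℝ) (hη : η = α ^ a / 10 ^ b)
    (hκ : κ = (9 * 10 ^ u - 1) * (3 * α - 2) * (α ^ 2 - α) ^ r * 10 ^ p / (9 * 10 ^ (u + R))) :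
    aeval α (nzNum a b r u p R E S e s) =
      ((10 ^ (b * E) * (9 * 10 ^ (u + R)) ^ S : ℕ) : ℝ) * (η ^ e * κ ^ s) := by
  obtain ⟨E', rfl⟩ : ∃ E', E = e + E' := ⟨E - e, by omega⟩
  obtain ⟨S', rfl⟩ : ∃ S', S = s + S' := ⟨S - s, by omega⟩
  simp only [nzNum, map_mul, map_pow, map_sub, aeval_X, aeval_C, Nat.add_sub_cancel_left]
  simp only [algebraMap_int_eq, eq_intCast]
  push_cast
  have e1 : (10 : ℝ) ^ (b * (e + E')) = (10 ^ b) ^ e * (10 ^ b) ^ E' := by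
    rw [← pow_mul, ← pow_mul, ← pow_add]; congr 1; ring
  have e2 : (9 * 10 ^ (u + R) : ℝ) * κ =
      (9 * 10 ^ u - 1) * (3 * α - 2) * (α ^ 2 - α) ^ r * 10 ^ p := by
    rw [hκ]; field_simp
  rw [← e2, e1, pow_mul 10 b E', hη, div_pow, pow_add (9 * 10 ^ (u + R) : ℝ), mul_pow _ κ, ← pow_mul α]
  field_simp

open Polynomial in
theorem nz_num_beta {α : ℝ} {β : ℂ} (H : NzRoots α β) (a b r u p R E S e s Y : ℕ)
    (hs : s ≤ S) (hr : r ≤ a) (hp : p ≤ 2 * R) (hb : b ≤ a) (hR : 3 ≤ R) (hY : Y = u + R + a) :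
    ‖aeval β (nzNum a b r u p R E S e s)‖ ≤ ((10 ^ (a * E + 3 * (Y * S)) : ℕ) : ℝ) := by
  have hβ := nz_beta_norm H
  obtain ⟨S', rfl⟩ : ∃ S', S = s + S' := ⟨S - s, by omega⟩
  have h0 : aeval β (nzNum a b r u p R E (s + S') e s) = β ^ (a * e) * 10 ^ (b * (E - e)) *
      (((9 * 10 ^ u - 1) * (3 * β - 2) * (β ^ 2 - β) ^ r * 10 ^ p) ^ s *
        (9 * 10 ^ (u + R)) ^ S') := by
    simp only [nzNum, map_mul, map_pow, map_sub, aeval_X, aeval_C, Nat.add_sub_cancel_left]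
    simp only [algebraMap_int_eq, eq_intCast]
    push_cast
    try rfl
  rw [h0]
  have h10 : ‖(10 : ℂ)‖ = 10 := by norm_num
  have h9 : ‖(9 * 10 ^ u - 1 : ℂ)‖ ≤ 9 * 10 ^ u := by
    have : (9 * 10 ^ u - 1 : ℂ) = ((9 * 10 ^ u - 1 : ℝ) : ℂ) := by push_cast; rfl
    rw [this, Complex.norm_real, Real.norm_eq_abs]
    have h1 : (1 : ℝ) ≤ 10 ^ u := one_le_pow₀ (by norm_num)
    rw [abs_of_nonneg (by linarith)]; linarith
  have h3 : ‖(3 * β - 2 : ℂ)‖ ≤ 5 := by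
    refine (norm_sub_le _ _).trans ?_
    rw [norm_mul]; norm_num; linarith
  have h4 : ‖(β ^ 2 - β : ℂ)‖ ≤ 10 := by
    refine (norm_sub_le _ _).trans ?_
    rw [norm_pow]; nlinarith [norm_nonneg β]
  have h5 : ‖(9 * 10 ^ u - 1 : ℂ)‖ * ‖(3 * β - 2 : ℂ)‖ * ‖(β ^ 2 - β : ℂ)‖ ^ r * ‖(10 : ℂ)‖ ^ p ≤
      10 ^ (3 * Y) := by
    calc _ ≤ (9 * 10 ^ u) * 5 * 10 ^ r * ‖(10 : ℂ)‖ ^ p := by gcongr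
      _ = 45 * 10 ^ (u + r + p) := by rw [h10]; ring
      _ ≤ 10 ^ 2 * 10 ^ (u + r + p) := by gcongr; norm_num
      _ = 10 ^ (2 + (u + r + p)) := (pow_add _ _ _).symm
      _ ≤ _ := pow_le_pow_right₀ (by norm_num) (by omega)
  have h6 : ‖(9 : ℂ)‖ * ‖(10 : ℂ)‖ ^ (u + R) ≤ 10 ^ (3 * Y) := by
    calc _ ≤ 10 ^ 1 * 10 ^ (u + R) := by rw [h10]; gcongr; norm_num
      _ = (10 : ℝ) ^ (1 + (u + R)) := (pow_add _ _ _).symm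
      _ ≤ _ := pow_le_pow_right₀ (by norm_num) (by omega)
  have h7 : ‖β‖ ^ (a * e) ≤ 1 := pow_le_one₀ (norm_nonneg _) hβ.le
  have h8 : ‖(10 : ℂ)‖ ^ (b * (E - e)) ≤ 10 ^ (a * E) := by
    rw [h10]; exact pow_le_pow_right₀ (by norm_num) (Nat.mul_le_mul hb (by omega))
  rw [norm_mul, norm_mul, norm_mul, norm_pow, norm_pow, norm_pow, norm_pow, norm_mul, norm_mul,
    norm_mul, norm_pow, norm_pow, norm_mul, norm_pow]
  calc _ ≤ 1 * 10 ^ (a * E) * ((10 ^ (3 * Y)) ^ s * (10 ^ (3 * Y)) ^ S') := by gcongr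
    _ = ((10 : ℝ) ^ (a * E + 3 * (Y * (s + S')))) := by
        rw [one_mul, ← pow_mul, ← pow_mul, ← pow_add, ← pow_add]; congr 1; ring
    _ = _ := by push_cast; rfl

theorem nz_hB (t q S a E' Y R : ℕ) (ht : 2 ^ 100 ≤ t) (hq : q ≤ 2 * t ^ 20) (hS : S ≤ t ^ 16)
    (h1 : 10000 * (a * E') ≤ 2 * t ^ 16) (h2 : 10000 * (Y * S) ≤ t ^ 16) (hR : R ≤ Y) :
    ((t ^ 16 * (201 * t) : ℕ) : ℝ) * ((q : ℝ) * (S : ℝ)) ^ (t ^ 16) *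
      ((10 ^ (a * E' + 3 * (Y * S)) : ℕ) : ℝ) ^ (201 * t) *
      Real.exp (4 * (3 * ((201 * t * S * R : ℕ) : ℝ))) ≤ 2 ^ (2 * t ^ 17) := by
  have ht0 : 201 ≤ t := le_trans (by norm_num) ht
  have hK : 18 ≤ t ^ 16 := by
    calc 18 ≤ t := by omega
      _ ≤ t ^ 16 := Nat.le_self_pow (by norm_num) t
  have e1 : t ^ 16 * (201 * t) * (q * S) ^ (t ^ 16) ≤ 2 ^ (t ^ 17) := by
    calc t ^ 16 * (201 * t) * (q * S) ^ (t ^ 16) ≤ t ^ 16 * (t * t) * (2 * t ^ 20 * t ^ 16) ^ (t ^ 16) := by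
          gcongr
      _ = t ^ 18 * (2 * t ^ 36) ^ (t ^ 16) := by ring_nf
      _ ≤ t ^ (t ^ 16) * (t * t ^ 36) ^ (t ^ 16) := by
          gcongr <;> omega
      _ = t ^ (38 * t ^ 16) := by
          rw [← pow_succ', ← pow_mul, ← pow_add]; congr 1; ring
      _ ≤ t ^ (80 * t ^ 16) := by
          apply Nat.pow_le_pow_right (by omega); omega
      _ = (t ^ 80) ^ (t ^ 16) := by rw [pow_mul]
      _ ≤ (2 ^ t) ^ (t ^ 16) := Nat.pow_le_pow_left (nz_tau_pow t ht) _
      _ = 2 ^ (t ^ 17) := by rw [← pow_mul]; congr 1; ring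
  have e2 : (10 ^ (a * E' + 3 * (Y * S))) ^ (201 * t) ≤ 2 ^ (4 * (a * E' + 3 * (Y * S)) * (201 * t)) := by
    rw [pow_mul 2, pow_mul 2]; gcongr; norm_num
  have e3 : Real.exp (4 * (3 * ((201 * t * S * R : ℕ) : ℝ))) ≤ 2 ^ (18 * (201 * t * S * R)) := by
    have h : Real.exp 12 ≤ 2 ^ 18 := by
      have h := Real.exp_one_lt_d9
      have h2 : Real.exp 12 = Real.exp 1 ^ 12 := by rw [← Real.exp_nat_mul]; norm_num
      rw [h2]
      have : Real.exp 1 ^ 12 ≤ 2.72 ^ 12 :=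
        pow_le_pow_left₀ (Real.exp_pos _).le (by linarith) _
      norm_num at this ⊢
      linarith
    have h3 : Real.exp (4 * (3 * ((201 * t * S * R : ℕ) : ℝ))) = Real.exp 12 ^ (201 * t * S * R) := by
      rw [← Real.exp_nat_mul]; congr 1; ring
    rw [h3, pow_mul 2]
    exact pow_le_pow_left₀ (Real.exp_pos _).le h _
  have e4 : t ^ 17 + 4 * (a * E' + 3 * (Y * S)) * (201 * t) + 18 * (201 * t * S * R) ≤ 2 * t ^ 17 := by
    have i1 : S * R ≤ Y * S := by rw [mul_comm]; gcongr
    have i2 : 10000 * (4 * (a * E' + 3 * (Y * S)) * (201 * t) + 18 * (201 * t * S * R)) ≤ 10000 * t ^ 17 := by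
      calc _ = t * (804 * (10000 * (a * E')) + 2412 * (10000 * (Y * S)) + 3618 * (10000 * (S * R))) := by ring
        _ ≤ t * (804 * (2 * t ^ 16) + 2412 * t ^ 16 + 3618 * t ^ 16) := by
            gcongr; omega
        _ = 7638 * t ^ 17 := by ring
        _ ≤ _ := by omega
    omega
  have e1' : ((t ^ 16 * (201 * t) : ℕ) : ℝ) * ((q : ℝ) * (S : ℝ)) ^ (t ^ 16) ≤ 2 ^ (t ^ 17) := by
    exact_mod_cast e1
  have e2' : ((10 ^ (a * E' + 3 * (Y * S)) : ℕ) : ℝ) ^ (201 * t) ≤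
      2 ^ (4 * (a * E' + 3 * (Y * S)) * (201 * t)) := by
    exact_mod_cast e2
  calc _ ≤ (2 : ℝ) ^ (t ^ 17) * 2 ^ (4 * (a * E' + 3 * (Y * S)) * (201 * t)) *
        2 ^ (18 * (201 * t * S * R)) := by
        have := Real.exp_pos (4 * (3 * ((201 * t * S * R : ℕ) : ℝ)))
        gcongr
    _ = 2 ^ (t ^ 17 + 4 * (a * E' + 3 * (Y * S)) * (201 * t) + 18 * (201 * t * S * R)) := by
        rw [← pow_add, ← pow_add]
    _ ≤ _ := pow_le_pow_right₀ (by norm_num) e4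

/-- Rational approximation of `log α / log 10`. -/
theorem nz_dir {α : ℝ} {β : ℂ} (H : NzRoots α β) (Q : ℕ) (hQ : 1 ≤ Q) :
    ∃ a b : ℕ, 1 ≤ a ∧ a ≤ Q ∧ b ≤ a ∧
      |a * Real.log α - b * Real.log 10| ≤ Real.log 10 / Q := by
  obtain ⟨l0, l1⟩ := nz_log10
  have hlo := H.lo
  have hhi := H.hi
  have hα0 : 0 < Real.log α := Real.log_pos (by linarith)
  have hα1 : Real.log α < Real.log 10 / 2 := by
    have h2 : 2 * Real.log α = Real.log (α ^ 2) := by rw [Real.log_pow]; norm_num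
    have : Real.log (α ^ 2) < Real.log 10 := Real.log_lt_log (by positivity) (by nlinarith)
    linarith
  obtain ⟨j, k, hk0, hkQ, h⟩ := Real.exists_int_int_abs_mul_sub_le (Real.log α / Real.log 10)
    (n := Q) (by omega)
  have hx0 : 0 < Real.log α / Real.log 10 := by positivity
  have hx1 : Real.log α / Real.log 10 < 1 / 2 := by
    rw [div_lt_iff₀ l0]; linarith
  have hQ' : (1 : ℝ) ≤ Q := by exact_mod_cast hQ
  have hb : 1 / ((Q : ℝ) + 1) ≤ 1 / 2 := by
    apply one_div_le_one_div_of_le <;> linarith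
  have hk1 : (1 : ℝ) ≤ k := by exact_mod_cast hk0
  rw [abs_le] at h
  have hj0 : 0 ≤ j := by
    have : (-1 : ℝ) < j := by nlinarith
    have : (-1 : ℤ) < j := by exact_mod_cast this
    omega
  have hjk : j ≤ k := by
    have : (j : ℝ) < k + 1 := by nlinarith
    have : j < k + 1 := by exact_mod_cast this
    omega
  refine ⟨k.toNat, j.toNat, by omega, by omega, by omega, ?_⟩
  have c1 : ((k.toNat : ℕ) : ℝ) = k := by exact_mod_cast Int.toNat_of_nonneg hk0.le
  have c2 : ((j.toNat : ℕ) : ℝ) = j := by exact_mod_cast Int.toNat_of_nonneg hj0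
  rw [c1, c2]
  have : (k : ℝ) * Real.log α - j * Real.log 10 =
      (k * (Real.log α / Real.log 10) - j) * Real.log 10 := by field_simp
  rw [this, abs_mul, abs_of_pos l0]
  have h' : |(k : ℝ) * (Real.log α / Real.log 10) - j| ≤ 1 / Q := by
    refine (abs_le.mpr h).trans ?_
    apply one_div_le_one_div_of_le <;> linarith
  calc _ ≤ 1 / (Q : ℝ) * Real.log 10 := by gcongr
    _ = _ := by ring

theorem nz_size {α : ℝ} {β : ℂ} (H : NzRoots α β) (n M : ℕ) (κ ν : ℝ) (h1 : 2 ≤ κ) (h2 : κ ≤ 3)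
    (hν : |ν - 1| ≤ 1 / 2) (h : 10 ^ M * κ = α ^ n * ν) :
    |n * Real.log α - M * Real.log 10| ≤ Real.log 10 := by
  have hlo := H.lo
  rw [abs_le] at hν
  have hp : 0 < α ^ n := by positivity
  have hM : (0 : ℝ) < 10 ^ M := by positivity
  have a1 : (10 : ℝ) ^ M ≤ α ^ n := by nlinarith
  have a2 : α ^ n ≤ 10 ^ (M + 1) := by rw [pow_succ]; nlinarith
  have b1 := Real.log_le_log hM a1
  have b2 := Real.log_le_log hp a2
  rw [Real.log_pow, Real.log_pow] at b1 b2
  push_cast at b2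
  rw [abs_le]
  constructor <;> linarith [nz_log10.1]

theorem nz_small {α : ℝ} {β : ℂ} (H : NzRoots α β) (n u t : ℕ) (ht : 2 ^ 100 ≤ t)
    (hn : t ^ 20 ≤ n) (hu : u ≤ t) :
    10 ^ u / α ^ n ≤ (1 / 2) ^ (217 * t ^ 17) := by
  have hlo := H.lo
  have ht0 : 500 ≤ t := le_trans (by norm_num) ht
  have e : 4 * t + 217 * t ^ 17 ≤ n / 2 := by
    have h1 : t ≤ t ^ 17 := Nat.le_self_pow (by norm_num) t
    have h2 : 500 * t ^ 17 ≤ t ^ 20 := by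
      calc 500 * t ^ 17 ≤ t ^ 3 * t ^ 17 := by
            gcongr; exact ht0.trans (Nat.le_self_pow (by norm_num) t)
        _ = t ^ 20 := by ring
    omega
  have hp : 0 < α ^ n := by positivity
  rw [div_le_iff₀ hp]
  have h1 : (10 : ℝ) ^ u ≤ 2 ^ (4 * t) := by
    rw [pow_mul]
    calc (10 : ℝ) ^ u ≤ 10 ^ t := pow_le_pow_right₀ (by norm_num) hu
      _ ≤ _ := by gcongr; norm_num
  have h2 : (2 : ℝ) ^ (4 * t + 217 * t ^ 17) ≤ α ^ n := by
    calc (2 : ℝ) ^ (4 * t + 217 * t ^ 17) ≤ 2 ^ (n / 2) := pow_le_pow_right₀ (by norm_num) e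
      _ ≤ (α ^ 2) ^ (n / 2) := by gcongr; nlinarith
      _ = α ^ (2 * (n / 2)) := by rw [pow_mul]
      _ ≤ α ^ n := pow_le_pow_right₀ (by linarith) (by omega)
  calc (10 : ℝ) ^ u ≤ 2 ^ (4 * t) := h1
    _ = (1 / 2) ^ (217 * t ^ 17) * 2 ^ (4 * t + 217 * t ^ 17) := by
        rw [pow_add, mul_comm ((2 : ℝ) ^ (4 * t)), ← mul_assoc, ← mul_pow]; norm_num
    _ ≤ _ := by gcongr

theorem nz_kappa (α ν : ℝ) (n M u a b q r p R : ℕ) (h1 : α * (α ^ 2 - α) = 1)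
    (hn : n = a * q + r) (hp : M + R = q * b + p)
    (h : 10 ^ M * ((3 * α - 2) * ((9 * 10 ^ u - 1) / (9 * 10 ^ u))) = α ^ n * ν) :
    (9 * 10 ^ u - 1) * (3 * α - 2) * (α ^ 2 - α) ^ r * 10 ^ p / (9 * 10 ^ (u + R)) =
      (α ^ a / 10 ^ b) ^ q * ν := by
  have hr : α ^ r * (α ^ 2 - α) ^ r = 1 := by rw [← mul_pow, h1, one_pow]
  have e1 : (10 : ℝ) ^ M * 10 ^ R = (10 ^ b) ^ q * 10 ^ p := by
    rw [← pow_add, hp, pow_add, ← pow_mul]; congr 2; ring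
  have e2 : α ^ n = (α ^ a) ^ q * α ^ r := by rw [hn, pow_add, pow_mul]
  rw [e2] at h
  rw [div_pow, div_eq_iff (by positivity)]
  have hb : (0 : ℝ) < (10 ^ b) ^ q := by positivity
  have h10 : (0 : ℝ) < 10 ^ u := by positivity
  have h' : 10 ^ M * ((3 * α - 2) * (9 * 10 ^ u - 1)) = (α ^ a) ^ q * α ^ r * ν * (9 * 10 ^ u) := by
    rw [← h]; field_simp
  have : (α ^ a) ^ q / (10 ^ b) ^ q * ν * (9 * 10 ^ (u + R)) =
      ((α ^ a) ^ q * ν * (9 * 10 ^ u) * 10 ^ R) / (10 ^ b) ^ q := by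
    rw [pow_add]; ring
  rw [this, eq_div_iff hb.ne']
  calc _ = (9 * 10 ^ u - 1) * (3 * α - 2) * (α ^ 2 - α) ^ r * ((10 ^ b) ^ q * 10 ^ p) := by ring
    _ = 10 ^ M * ((3 * α - 2) * (9 * 10 ^ u - 1)) * (α ^ 2 - α) ^ r * 10 ^ R := by rw [← e1]; ring
    _ = (α ^ a) ^ q * (α ^ r * (α ^ 2 - α) ^ r) * ν * (9 * 10 ^ u) * 10 ^ R := by rw [h']; ring
    _ = _ := by rw [hr]; ring

theorem nz_app {α : ℝ} {β : ℂ} (H : NzRoots α β) (n u M t : ℕ) (ht : 2 ^ 100 ≤ t)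
    (hn : t ^ 20 ≤ n) (hn2 : n ≤ 2 * t ^ 20) (hu1 : 1 ≤ u) (hut : u ≤ t) (ν : ℝ)
    (hν0 : 10 ^ M * ((3 * α - 2) * ((9 * 10 ^ u - 1) / (9 * 10 ^ u))) = α ^ n * ν)
    (hν1 : |ν - 1| ≤ 10 ^ u / α ^ n) : False := by
  obtain ⟨l0, l1⟩ := nz_log10
  have hlo := H.lo
  have hhi := H.hi
  have hα0 : 0 < α := by linarith
  have hc := H.cube
  have hinv : α * (α ^ 2 - α) = 1 := by linear_combination hc
  have ht0 : 1000 ≤ t := le_trans (by norm_num) ht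
  have hx := nz_small H n u t ht hn hut
  have hx1 : ((1 : ℝ) / 2) ^ (217 * t ^ 17) ≤ 1 / 2 := by
    have : 1 ≤ t ^ 17 := Nat.one_le_pow _ _ (by omega)
    calc ((1 : ℝ) / 2) ^ (217 * t ^ 17) ≤ (1 / 2) ^ 1 :=
          pow_le_pow_of_le_one (by norm_num) (by norm_num) (by omega)
      _ = _ := by norm_num
  have hν2 : |ν - 1| ≤ (1 / 2) ^ (217 * t ^ 17) := hν1.trans hx
  have hν3 : |ν - 1| ≤ 1 / 2 := hν2.trans hx1
  have hκb : 98 / 100 ≤ ((9 * 10 ^ u - 1) / (9 * 10 ^ u) : ℝ) ∧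
      ((9 * 10 ^ u - 1) / (9 * 10 ^ u) : ℝ) ≤ 1 := by
    have h10 : (10 : ℝ) ≤ 10 ^ u := by
      calc (10 : ℝ) = 10 ^ 1 := by norm_num
        _ ≤ 10 ^ u := pow_le_pow_right₀ (by norm_num) hu1
    rw [le_div_iff₀ (by positivity), div_le_iff₀ (by positivity)]
    constructor <;> linarith
  have hsz := nz_size H n M _ ν (by nlinarith) (by nlinarith) hν3 hν0
  have hQ1 : 1 ≤ t ^ 6 := Nat.one_le_pow _ _ (by omega)
  obtain ⟨a, b, ha1, haQ, hba, hab⟩ := nz_dir H (t ^ 6) hQ1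
  obtain ⟨E, S, hE, hES, hS1, hSt, haE, hYS⟩ := nz_params t n a (n / a) u (n / a / t ^ 6 + a + 2)
    (u + (n / a / t ^ 6 + a + 2) + a) ht hn hn2 hut ha1 haQ rfl rfl rfl
  set q := n / a with hq
  set R := q / t ^ 6 + a + 2 with hR
  set Y := u + R + a with hY
  set r := n % a with hr
  have hnqr : n = a * q + r := (Nat.div_add_mod n a).symm
  have hra : r ≤ a := (Nat.mod_lt _ (by omega)).le
  have hqn : q ≤ 2 * t ^ 20 := (Nat.div_le_self _ _).trans hn2
  have hQr : (0 : ℝ) < ((t ^ 6 : ℕ) : ℝ) := by exact_mod_cast hQ1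
  have hqR : (q : ℝ) / ((t ^ 6 : ℕ) : ℝ) + a + 1 ≤ R := by
    have h1 : (q : ℝ) / ((t ^ 6 : ℕ) : ℝ) ≤ ((q / t ^ 6 : ℕ) : ℝ) + 1 := by
      rw [div_le_iff₀ hQr]
      have h2 : q < (q / t ^ 6 + 1) * t ^ 6 := Nat.lt_mul_of_div_lt (Nat.lt_succ_self _) (by omega)
      exact_mod_cast h2.le
    rw [hR]; push_cast at h1 ⊢; linarith
  have hlogα : 0 < Real.log α := Real.log_pos (by linarith)
  have hlogα1 : Real.log α ≤ Real.log 10 := Real.log_le_log hα0 (by linarith)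
  have hMq : |(M : ℝ) - q * b| ≤ R := by
    have e : ((M : ℝ) - q * b) * Real.log 10 = -(n * Real.log α - M * Real.log 10) +
        q * (a * Real.log α - b * Real.log 10) + r * Real.log α := by
      rw [hnqr]; push_cast; ring
    have h2 : |((M : ℝ) - q * b) * Real.log 10| ≤ R * Real.log 10 := by
      rw [e]
      calc _ ≤ |(n * Real.log α - M * Real.log 10)| + |q * (a * Real.log α - b * Real.log 10)| +
            |r * Real.log α| := by
              refine (abs_add_le _ _).trans ?_
              gcongr
              refine (abs_add_le _ _).trans ?_
              rw [abs_neg]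
        _ ≤ Real.log 10 + q * (Real.log 10 / ((t ^ 6 : ℕ) : ℝ)) + a * Real.log 10 := by
              gcongr
              · rw [abs_mul, Nat.abs_cast]; gcongr
              · rw [abs_mul, Nat.abs_cast, abs_of_pos hlogα]
                have : (r : ℝ) ≤ a := by exact_mod_cast hra
                gcongr
        _ = (q / ((t ^ 6 : ℕ) : ℝ) + a + 1) * Real.log 10 := by ring
        _ ≤ _ := by gcongr
    rw [abs_mul, abs_of_pos l0] at h2
    exact le_of_mul_le_mul_right h2 l0
  rw [abs_le] at hMq
  have hM1 : q * b ≤ M + R := by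
    have : (q * b : ℝ) ≤ M + R := by linarith [hMq.1]
    exact_mod_cast this
  have hM2 : M ≤ q * b + R := by
    have : (M : ℝ) ≤ q * b + R := by linarith [hMq.2]
    exact_mod_cast this
  obtain ⟨p, hp⟩ : ∃ p, M + R = q * b + p := ⟨M + R - q * b, by omega⟩
  have hp2 : p ≤ 2 * R := by omega
  have hκ := nz_kappa α ν n M u a b q r p R hinv hnqr hp hν0
  have hηpos : 0 < α ^ a / 10 ^ b := by positivity
  have hνpos : 0 < ν := by rw [abs_le] at hν3; linarith [hν3.1]
  have hR3 : 3 ≤ R := Nat.add_le_add_right (ha1.trans (Nat.le_add_left a (q / t ^ 6))) 2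
  have hRY : R ≤ Y := by omega
  refine nz_core H (t ^ 16) (201 * t) E S q (2 * t ^ 17) (10 ^ (a * (E + 201 * t) + 3 * (Y * S)))
    (10 ^ (b * (E + 201 * t)) * (9 * 10 ^ (u + R)) ^ S) (α ^ a / 10 ^ b)
    ((9 * 10 ^ u - 1) * (3 * α - 2) * (α ^ 2 - α) ^ r * 10 ^ p / (9 * 10 ^ (u + R))) ν
    (3 * ((201 * t * S * R : ℕ) : ℝ)) (Nat.one_le_pow _ _ (by omega)) ?_ ?_ hηpos ?_ ?_ hE hES hκ ?_ ?_
    (fun e s => nzNum a b r u p R (E + 201 * t) S e s) ?_ ?_ ?_ ?_ ?_ ?_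
  · have : t ≤ t ^ 17 := Nat.le_self_pow (by norm_num) t
    omega
  · calc 2 ≤ q * 1 := by omega
      _ ≤ q * S := by gcongr
  · intro h
    rw [div_eq_one_iff_eq (by positivity)] at h
    exact nz_eta_ne H a b ha1 h
  · rw [hκ]; positivity
  · intro i hi
    have h1 := nz_nu_pow ν ((1 / 2) ^ (217 * t ^ 17)) (hx1.trans (by norm_num)) hν2 i
    refine h1.trans ?_
    have hi2 : i ≤ 201 * t ^ 17 := by
      calc i ≤ S * (201 * t) := hi
        _ ≤ t ^ 16 * (201 * t) := by gcongr
        _ = 201 * t ^ 17 := by ring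
    calc ((2 : ℝ) ^ i - 1) * (1 / 2) ^ (217 * t ^ 17) ≤ 2 ^ (201 * t ^ 17) * (1 / 2) ^ (217 * t ^ 17) := by
          gcongr
          have : (2 : ℝ) ^ i ≤ 2 ^ (201 * t ^ 17) := pow_le_pow_right₀ (by norm_num) hi2
          linarith
      _ = (1 / 2) ^ (8 * (2 * t ^ 17)) := by
          have : 217 * t ^ 17 = 201 * t ^ 17 + 8 * (2 * t ^ 17) := by ring
          rw [this, pow_add, ← mul_assoc, ← mul_pow]; norm_num
  · rw [Real.log_div (by positivity) (by positivity), Real.log_pow, Real.log_pow]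
    have hq3 : q * |(a : ℝ) * Real.log α - b * Real.log 10| ≤ 3 * R := by
      calc _ ≤ q * (Real.log 10 / ((t ^ 6 : ℕ) : ℝ)) := by gcongr
        _ = Real.log 10 * (q / ((t ^ 6 : ℕ) : ℝ)) := by ring
        _ ≤ 3 * R := by
            have : (q : ℝ) / ((t ^ 6 : ℕ) : ℝ) ≤ R := by
              have : (0 : ℝ) ≤ a := by positivity
              linarith
            gcongr
    push_cast
    calc _ = (201 * t * S) * (q * |(a : ℝ) * Real.log α - b * Real.log 10|) := by ring
      _ ≤ (201 * t * S) * (3 * R) := by gcongr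
      _ = _ := by ring
  · exact Nat.one_le_iff_ne_zero.mpr (by positivity)
  · calc 10 ^ (b * (E + 201 * t)) * (9 * 10 ^ (u + R)) ^ S
        ≤ 10 ^ (a * (E + 201 * t)) * (10 ^ 1 * 10 ^ (u + R)) ^ S := by
          gcongr <;> norm_num
      _ = 10 ^ (a * (E + 201 * t) + (1 + (u + R)) * S) := by
          rw [← pow_add, ← pow_mul, ← pow_add]
      _ ≤ _ := by
          apply Nat.pow_le_pow_right (by norm_num)
          have : (1 + (u + R)) * S ≤ 3 * Y * S := by gcongr; omega
          rw [mul_assoc] at this; omega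
  · intro e he s hs
    exact nz_num_alpha α a b r u p R _ S e s he.le hs.le _ _ rfl rfl
  · intro e he s hs
    exact nz_num_beta H a b r u p R _ S e s Y hs.le hra hp2 hba hR3 hY
  · exact nz_hB t q S a (E + 201 * t) Y R ht hqn hSt haE hYS hRY
  · have : t ^ 16 * (201 * t) = 201 * t ^ 17 := by ring
    have : 1 ≤ t ^ 17 := Nat.one_le_pow _ _ (by omega)
    omega

theorem nz_asym {α : ℝ} {β : ℂ} (H : NzRoots α β) (n : ℕ) :
    |(3 * α - 2) * narayana n - α ^ n| ≤ 2 := by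
  have hlo := H.lo
  have hhi := H.hi
  have hc := H.cube
  obtain ⟨d, hd⟩ : ∃ d : ℕ → ℝ, ∀ n, d n = (3 * α - 2) * narayana n - α ^ n := ⟨_, fun _ => rfl⟩
  have h0 : d 0 = -1 := by rw [hd]; simp [narayana]
  have h1 : d 1 = 2 * α - 2 := by rw [hd]; simp [narayana]; ring
  have h2 : d 2 = 3 * α - 2 - α ^ 2 := by rw [hd]; simp [narayana]
  have h3 : ∀ n, d (n + 3) = d (n + 2) + d n := fun n => by
    rw [hd, hd, hd, narayana]; push_cast; linear_combination (-α ^ n) * hc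
  have he : ∀ n, d (n + 2) + (α - 1) * d (n + 1) + (α ^ 2 - α) * d n = 0 := by
    intro n
    induction n with
    | zero => simp only [zero_add]; rw [h0, h1, h2]; ring
    | succ n ih =>
      have e := h3 n
      have : d (n + 1 + 2) = d (n + 3) := rfl
      rw [this, e, show n + 1 + 1 = n + 2 from rfl]
      linear_combination α * ih - d n * hc
  have hQ : ∀ n, 0 ≤ d (n + 1) ^ 2 + (α - 1) * d (n + 1) * d n + (α ^ 2 - α) * d n ^ 2 ∧
      d (n + 1) ^ 2 + (α - 1) * d (n + 1) * d n + (α ^ 2 - α) * d n ^ 2 ≤ 2 := by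
    intro n
    induction n with
    | zero =>
      simp only [zero_add]; rw [h0, h1]
      constructor <;> nlinarith
    | succ n ih =>
      have e : d (n + 1 + 1) = -((α - 1) * d (n + 1) + (α ^ 2 - α) * d n) := by
        have := he n
        rw [show n + 1 + 1 = n + 2 from rfl]; linarith
      have e2 : d (n + 1 + 1) ^ 2 + (α - 1) * d (n + 1 + 1) * d (n + 1) +
          (α ^ 2 - α) * d (n + 1) ^ 2 = (α ^ 2 - α) *
          (d (n + 1) ^ 2 + (α - 1) * d (n + 1) * d n + (α ^ 2 - α) * d n ^ 2) := by
        rw [e]; ring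
      rw [e2]
      obtain ⟨i1, i2⟩ := ih
      have c0 : 0 ≤ α ^ 2 - α := by nlinarith
      have c1 : α ^ 2 - α ≤ 1 := by nlinarith
      exact ⟨mul_nonneg c0 i1, (mul_le_of_le_one_left i1 c1).trans i2⟩
  rw [← hd]
  have h := (hQ n).2
  have hs := sq_nonneg (d (n + 1) + (α - 1) / 2 * d n)
  have hf : (1 / 2 : ℝ) ≤ α ^ 2 - α - (α - 1) ^ 2 / 4 := by nlinarith
  have : (1 / 2) * d n ^ 2 ≤ 2 := by nlinarith [sq_nonneg (d n)]
  apply abs_le_of_sq_le_sq (by linarith) (by norm_num)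

theorem nz_root20 (n : ℕ) : ∃ t : ℕ, t ^ 20 ≤ n ∧ n < (t + 1) ^ 20 := by
  refine ⟨Nat.findGreatest (fun t => t ^ 20 ≤ n) n, ?_, ?_⟩
  · exact Nat.findGreatest_spec (P := fun t => t ^ 20 ≤ n) (m := 0) (by omega) (by norm_num)
  · by_contra hc
    push Not at hc
    have := Nat.le_findGreatest (P := fun t => t ^ 20 ≤ n) (n := n)
      (m := Nat.findGreatest (fun t => t ^ 20 ≤ n) n + 1)
      (le_trans (Nat.le_self_pow (by norm_num) _) hc) hc
    omega

theorem nz_nine (n u v : ℕ) (hu : 3000 ≤ u) (hsz : 2 ^ u ≤ 2 ^ 10 * (n + 4))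
    (heq : 9 * narayana n + 9 + 10 ^ (u + v) = 9 * 10 ^ (2 * u + v) + 10 ^ u) : False := by
  obtain ⟨α, β, H⟩ := nz_exists_roots
  obtain ⟨t, ht1, ht2⟩ := nz_root20 n
  have ht : 2 ^ 100 ≤ t := by
    by_contra hc
    push Not at hc
    have h1 : (t + 1) ^ 20 ≤ (2 ^ 100) ^ 20 := Nat.pow_le_pow_left hc 20
    have h2 : 2 ^ 3000 ≤ 2 ^ u := Nat.pow_le_pow_right (by norm_num) hu
    norm_num at h1 h2 hsz
    omega
  have ht3 : n ≤ 2 * t ^ 20 := by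
    have h1 : 40 * (t + 1) ≤ 41 * t := by omega
    have h2 := Nat.pow_le_pow_left h1 20
    rw [mul_pow, mul_pow] at h2
    norm_num at h2
    omega
  have hut : u ≤ t := by
    by_contra hc
    push Not at hc
    have h1 : 2 ^ t ≤ 2 ^ u := Nat.pow_le_pow_right (by norm_num) hc.le
    have h2 := nz_tau_pow t ht
    have h3 : 2 ^ 10 * (2 * t ^ 20 + 4) < t ^ 80 := by
      have a1 : 1 ≤ t ^ 20 := Nat.one_le_pow _ _ (by omega)
      calc 2 ^ 10 * (2 * t ^ 20 + 4) ≤ 2 ^ 13 * t ^ 20 := by omega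
        _ < t * t ^ 20 := by apply Nat.mul_lt_mul_of_pos_right _ a1; omega
        _ = t ^ 21 := by ring
        _ ≤ t ^ 80 := Nat.pow_le_pow_right (by omega) (by norm_num)
    omega
  have hlo := H.lo
  have hhi := H.hi
  have hp : 0 < α ^ n := by positivity
  have has := nz_asym H n
  have h10 : (10 : ℝ) ≤ 10 ^ u := by
    calc (10 : ℝ) = 10 ^ 1 := by norm_num
      _ ≤ 10 ^ u := pow_le_pow_right₀ (by norm_num) (by omega)
  have hr : (9 : ℝ) * narayana n + 9 + 10 ^ (u + v) = 9 * 10 ^ (2 * u + v) + 10 ^ u := by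
    exact_mod_cast heq
  have key : α ^ n = 10 ^ (2 * u + v) * ((3 * α - 2) * ((9 * 10 ^ u - 1) / (9 * 10 ^ u))) +
      ((3 * α - 2) * (10 ^ u / 9 - 1) - ((3 * α - 2) * narayana n - α ^ n)) := by
    have e1 : (10 : ℝ) ^ (2 * u + v) = 10 ^ u * 10 ^ (u + v) := by rw [← pow_add]; congr 1; ring
    have e2 : (10 : ℝ) ^ (2 * u + v) * ((9 * 10 ^ u - 1) / (9 * 10 ^ u)) =
        10 ^ (2 * u + v) - 10 ^ (u + v) / 9 := by
      rw [e1]; field_simp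
    linear_combination (3 * α - 2) / 9 * hr - (3 * α - 2) * e2
  set A := 10 ^ (2 * u + v) * ((3 * α - 2) * ((9 * 10 ^ u - 1) / (9 * 10 ^ u))) with hA
  refine nz_app H n u (2 * u + v) t ht ht1 ht3 (by omega) hut (A / α ^ n) ?_ ?_
  · rw [← hA]; field_simp
  · have : A / α ^ n - 1 = (A - α ^ n) / α ^ n := by field_simp
    rw [this, abs_div, abs_of_pos hp]
    gcongr
    rw [abs_le] at has ⊢
    have g1 : 0 ≤ (3 * α - 2) * (10 ^ u / 9 - 1) := mul_nonneg (by linarith) (by linarith)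
    have g2 : (3 * α - 2) * (10 ^ u / 9 - 1) ≤ 2.5 * (10 ^ u / 9 - 1) :=
      mul_le_mul_of_nonneg_right (by linarith) (by linarith)
    constructor <;> linarith [has.1, has.2]

theorem nz_pow_lift {R : Type*} [Ring R] (x g : R) (h : x ^ 14 = 1 + (4 : ℤ) • g) (j : ℕ) :
    ∃ D : R, x ^ (14 * 2 ^ j) = 1 + (2 ^ (j + 2) : ℤ) • (g + (2 : ℤ) • D) := by
  induction j with
  | zero => exact ⟨0, by simpa using h⟩
  | succ j ih =>
    obtain ⟨D, hD⟩ := ih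
    set G := g + (2 : ℤ) • D with hG
    refine ⟨D + (2 ^ j : ℤ) • (G * G), ?_⟩
    have e : 14 * 2 ^ (j + 1) = 14 * 2 ^ j * 2 := by ring
    rw [e, pow_mul, hD, pow_two, hG]
    simp only [mul_add, add_mul, one_mul, mul_one, smul_add, smul_mul_assoc, mul_smul_comm, smul_smul]
    match_scalars <;> ring

theorem nz_pow_odd {R : Type*} [Ring R] (x g : R) (h : x ^ 14 = 1 + (4 : ℤ) • g) (j k : ℕ) :
    ∃ D : R, x ^ (14 * 2 ^ j * k) = 1 + (2 ^ (j + 2) : ℤ) • ((k : ℤ) • g + (2 : ℤ) • D) := by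
  obtain ⟨D0, hD0⟩ := nz_pow_lift x g h j
  induction k with
  | zero => exact ⟨0, by simp⟩
  | succ k ih =>
    obtain ⟨D, hD⟩ := ih
    refine ⟨D + D0 + (2 ^ (j + 1) : ℤ) • (((k : ℤ) • g + (2 : ℤ) • D) * (g + (2 : ℤ) • D0)), ?_⟩
    rw [mul_add, mul_one, pow_add, hD, hD0]
    simp only [mul_add, add_mul, one_mul, mul_one, smul_add, smul_mul_assoc, mul_smul_comm, smul_smul]
    push_cast
    match_scalars <;> ring

def nzMat : Matrix (Fin 3) (Fin 3) ℤ := !![0, 1, 0; 0, 0, 1; 1, 0, 1]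

def nzGam : Matrix (Fin 3) (Fin 3) ℤ := !![10, 7, 15; 15, 10, 22; 22, 15, 32]

theorem nz_mat14 : nzMat ^ 14 = 1 + (4 : ℤ) • nzGam := by
  decide +kernel

/-- The sequence shifted by four steps. -/
def nzB (m : ℕ) : ℤ := (Matrix.mulVec (nzMat ^ m) ![-1, 0, 1]) 0

theorem nz_vec (m : ℕ) : Matrix.mulVec (nzMat ^ (m + 4)) ![-1, 0, 1] =
    ![(narayana m : ℤ), narayana (m + 1), narayana (m + 2)] := by
  induction m with
  | zero => decide +kernel
  | succ m ih =>
    rw [show m + 1 + 4 = (m + 4) + 1 by ring, pow_succ', ← Matrix.mulVec_mulVec, ih]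
    have : narayana (m + 1 + 2) = narayana (m + 2) + narayana m := rfl
    rw [this]
    ext i
    have e2 : narayana (1 + (m + 1)) = narayana (m + 2) := by congr 1; ring
    fin_cases i <;> simp [nzMat, Matrix.mulVec, dotProduct, Fin.sum_univ_three, add_comm, e2]

theorem nz_two_adic (n u : ℕ) (h14 : 14 ∣ n + 4) (h : (2 : ℤ) ^ u ∣ narayana n + 1) :
    2 ^ u ≤ 2 ^ 10 * (n + 4) := by
  obtain ⟨m, hm⟩ := h14
  have hm0 : m ≠ 0 := by rintro rfl; omega
  obtain ⟨j, k, hk, hjk⟩ := Nat.exists_eq_two_pow_mul_odd hm0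
  obtain ⟨D, hD⟩ := nz_pow_odd nzMat nzGam nz_mat14 j k
  have hv := nz_vec n
  rw [hm, hjk, ← mul_assoc, hD] at hv
  have h0 := congrFun hv 0
  obtain ⟨d, hd⟩ : ∃ d, d = Matrix.mulVec D ![-1, 0, 1] 0 := ⟨_, rfl⟩
  have hg : Matrix.mulVec nzGam ![-1, 0, 1] 0 = 5 := by decide +kernel
  rw [Matrix.add_mulVec, Matrix.smul_mulVec, Matrix.add_mulVec, Matrix.smul_mulVec,
    Matrix.smul_mulVec, Matrix.one_mulVec] at h0
  simp only [Pi.add_apply, Pi.smul_apply, ← hd, hg, Matrix.cons_val_zero, smul_eq_mul] at h0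
  have h1 : (narayana n : ℤ) + 1 = 2 ^ (j + 2) * (k * 5 + 2 * d) := by linarith
  have hu : u ≤ j + 2 := by
    by_contra hc
    push Not at hc
    have h2 : (2 : ℤ) ^ (j + 2 + 1) ∣ 2 ^ u := pow_dvd_pow 2 hc
    have h3 := h2.trans h
    rw [h1, pow_succ] at h3
    have h4 := Int.dvd_of_mul_dvd_mul_left (by positivity) h3
    obtain ⟨k', rfl⟩ := hk
    push_cast at h4
    omega
  have hk1 : 1 ≤ k := hk.pos
  calc 2 ^ u ≤ 2 ^ (j + 2) := Nat.pow_le_pow_right (by norm_num) hu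
    _ = 2 ^ 2 * (2 ^ j * 1) := by ring
    _ ≤ 2 ^ 2 * (2 ^ j * k) := by gcongr
    _ = 2 ^ 2 * m := by rw [hjk]
    _ ≤ _ := by rw [hm]; omega

theorem nz_nine' (n u v : ℕ) (hu : 3000 ≤ u) (h14 : 14 ∣ n + 4)
    (heq : 9 * narayana n + 9 + 10 ^ (u + v) = 9 * 10 ^ (2 * u + v) + 10 ^ u) : False := by
  refine nz_nine n u v hu (nz_two_adic n u h14 ?_) heq
  have h1 : ((narayana n : ℤ) + 1) * 9 = 2 ^ u * (5 ^ u * (9 * 10 ^ (u + v) + 1 - 10 ^ v)) := by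
    have : (9 : ℤ) * narayana n + 9 + 10 ^ (u + v) = 9 * 10 ^ (2 * u + v) + 10 ^ u := by
      exact_mod_cast heq
    have e : (10 : ℤ) ^ u = 2 ^ u * 5 ^ u := by rw [← mul_pow]; norm_num
    rw [← mul_assoc, ← e]
    have e2 : (10 : ℤ) ^ (2 * u + v) = 10 ^ u * 10 ^ (u + v) := by rw [← pow_add]; congr 1; ring
    have e3 : (10 : ℤ) ^ (u + v) = 10 ^ u * 10 ^ v := by rw [← pow_add]
    rw [e2] at this
    linear_combination this - e3
  refine IsCoprime.dvd_of_dvd_mul_right (z := 9) ?_ (Dvd.intro _ h1.symm)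
  exact IsCoprime.pow_left (by norm_num)

/-- A refinement level for the index `n`. -/
structure NzLv1 where
  P : ℕ
  r : ℕ
  A : ℕ
  a : ℕ
  b : ℕ
  c : ℕ

/-- A refinement level for the pair `(u, v)`. -/
structure NzLv2 where
  P : ℕ
  ru : ℕ
  cu : ℕ
  rv : ℕ
  cv : ℕ

def nzPi : ℕ := 1610837948938204701

def nzMM : ℕ := 16108379489382047010000

def nzL1 : List NzLv1 :=
  [⟨2, 7, 1, 0, 1, 0⟩,
    ⟨4, 2, 7, 3, 2, 4⟩,
    ⟨8, 2, 14, 41, 28, 60⟩,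
    ⟨16, 2, 28, 8641, 5896, 12664⟩,
    ⟨5, 31, 56, 384377665, 262271568, 563332848⟩,
    ⟨25, 5, 1736, 808080496676758549201, 10493874458884971813360, 2753842229323472077440⟩,
    ⟨125, 5, 8680, 9258604804708689480001, 9902675856319152082800, 4287087413036309107200⟩,
    ⟨625, 5, 43400, 9745474739481099390001, 9284577751093212984000, 10036679710787161926000⟩,
    ⟨1, 9, 217000, 15120820018447523430001, 4431281064959692320000, 3425459168496373320000⟩]

def nzL2 : List NzLv2 :=
  [⟨11, 2, 10, 2, 10⟩,
    ⟨13, 3, 100, 3, 100⟩,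
    ⟨27, 1, 1000000, 1, 1000000⟩,
    ⟨31, 5, 1000000, 5, 1000000⟩,
    ⟨61, 2, 401287786925136112, 2, 401287786925136112⟩,
    ⟨251, 5, 450919743462284383, 5, 450919743462284383⟩,
    ⟨139501, 3, 1305862033600008028, 3, 1305862033600008028⟩,
    ⟨6301, 7, 889910633273113882, 7, 889910633273113882⟩]

def nzL3 : List NzLv2 :=
  [⟨11, 1, 1, 2, 10⟩,
    ⟨13, 1, 1, 3, 100⟩,
    ⟨27, 1, 1, 1, 1000000⟩,
    ⟨31, 1, 1, 5, 1000000⟩,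
    ⟨61, 1, 1, 2, 401287786925136112⟩,
    ⟨251, 1, 1, 5, 450919743462284383⟩,
    ⟨139501, 1, 1, 3, 1305862033600008028⟩,
    ⟨6301, 1, 1, 7, 889910633273113882⟩]

/-- Forces the evaluation of a natural number. -/
noncomputable def nzF (x : ℕ) (k : ℕ → Bool) : Bool :=
  Nat.rec (motive := fun _ => Bool) (k 0) (fun m _ => k (Nat.succ m)) x

noncomputable def nzAnd (a b : Bool) : Bool := Bool.rec (motive := fun _ => Bool) false b a

noncomputable def nzImp (a b : Bool) : Bool := Bool.rec (motive := fun _ => Bool) true b a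

noncomputable def nzAll (f : ℕ → Bool) (c : ℕ) (k : ℕ) : ℕ → Bool :=
  Nat.rec (motive := fun _ => ℕ → Bool) (fun _ => true)
    (fun _ ih x => nzAnd (f x) (nzF (Nat.mod (Nat.mul x c) nzPi) ih)) k

noncomputable def nzTest2 (P f1 f2 w x y : ℕ) : Bool :=
  Nat.beq
    (Nat.mod (Nat.add (Nat.add w f1) (Nat.mul x (Nat.add (Nat.mul f1 y) f2))) P)
    (Nat.mod (Nat.mul x (Nat.add (Nat.mul y (Nat.add (Nat.mul f1 x) f2)) f1)) P)

noncomputable def nzChk2 (f1 f2 w : ℕ) (fl : Bool) (ls : List NzLv2) : ℕ → ℕ → Bool :=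
  List.rec (motive := fun _ => ℕ → ℕ → Bool)
    (fun x _ => nzAnd fl (nzAnd (Nat.beq f1 9) (nzAnd (Nat.beq f2 8)
      (Nat.beq (Nat.mod (Nat.mul 10 x) 6301) 1))))
    (fun lv _ ih x y => nzAll (fun x => nzAll
      (fun y => nzImp (nzTest2 lv.P f1 f2 w x y) (ih x y)) lv.cv lv.rv y) lv.cu lv.ru x) ls

noncomputable def nzLoop1 (f : ℕ → ℕ → ℕ → ℕ → Bool) (A d e g : ℕ) (k : ℕ) :
    ℕ → ℕ → ℕ → ℕ → Bool :=
  Nat.rec (motive := fun _ => ℕ → ℕ → ℕ → ℕ → Bool) (fun _ _ _ _ => true)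
    (fun _ ih n a b c => nzAnd (f n a b c)
      (nzF (Nat.add (Nat.mul b g) (Nat.mul c e)) fun p3 => nzF (Nat.mul c g) fun p4 =>
        nzF (Nat.add n A) fun n' =>
        nzF (Nat.mod (Nat.add (Nat.add (Nat.mul a d) p3) p4) nzMM) fun a' =>
        nzF (Nat.mod (Nat.add (Nat.add (Nat.mul a e) (Nat.mul b d)) p4) nzMM) fun b' =>
        nzF (Nat.mod (Nat.add (Nat.add (Nat.add (Nat.add (Nat.mul a g) (Nat.mul b e))
          (Nat.mul c d)) p3) p4) nzMM) fun c' => ih n' a' b' c')) k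

noncomputable def nzChk1 (f1 f2 X x0 : ℕ) (l2 : List NzLv2) (ls : List NzLv1) :
    ℕ → ℕ → ℕ → ℕ → Bool :=
  List.rec (motive := fun _ => ℕ → ℕ → ℕ → ℕ → Bool)
    (fun n _ b c => nzF (Nat.mod (Nat.mul 9 (Nat.add b c)) nzPi) fun w =>
      nzChk2 f1 f2 w (Nat.beq (Nat.mod (Nat.add n 4) 14) 0) l2 x0 1)
    (fun lv _ ih n a b c => nzLoop1 (fun n a b c =>
      nzImp (Nat.beq (Nat.mod (Nat.add (Nat.add (Nat.mul 9 (Nat.add b c)) f1) (Nat.mul f2 X)) lv.P)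
        (Nat.mod (Nat.mul f1 X) lv.P)) (ih n a b c)) lv.A lv.a lv.b lv.c lv.r n a b c) ls

/-- All second digits different from `f1`. -/
noncomputable def nzRun (f1 X x0 : ℕ) (l2 : List NzLv2) (k : ℕ) : Bool :=
  Nat.rec (motive := fun _ => Bool) true
    (fun f2 ih => nzAnd ih (nzImp (Bool.not (Nat.beq f1 f2)) (nzChk1 f1 f2 X x0 l2 nzL1 0 1 0 0))) k

theorem nz_modEq_of_eq {M a b : ℕ} (h : a = b) : a ≡ b [MOD M] := by rw [h]

theorem nzF_eq (x : ℕ) (k : ℕ → Bool) : nzF x k = k x := by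
  cases x <;> rfl

theorem nzAnd_eq (a b : Bool) : nzAnd a b = true ↔ a = true ∧ b = true := by
  cases a <;> cases b <;> decide

theorem nzImp_eq (a b : Bool) : nzImp a b = true ↔ (a = true → b = true) := by
  cases a <;> cases b <;> decide

theorem nzAll_succ (f : ℕ → Bool) (c k x : ℕ) :
    nzAll f c (k + 1) x = nzAnd (f x) (nzAll f c k (x * c % nzPi)) := by
  have : nzAll f c (k + 1) x = nzAnd (f x) (nzF (x * c % nzPi) (nzAll f c k)) := rfl
  rw [this, nzF_eq]

theorem nz_all_sound (f : ℕ → Bool) (c : ℕ) (k x : ℕ) (h : nzAll f c k x = true) (j : ℕ)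
    (hj : j < k) : ∃ x', x * c ^ j ≡ x' [MOD nzPi] ∧ f x' = true := by
  induction k generalizing x j with
  | zero => omega
  | succ k ih =>
    rw [nzAll_succ, nzAnd_eq] at h
    cases j with
    | zero => exact ⟨x, by rw [pow_zero, mul_one], h.1⟩
    | succ j =>
      obtain ⟨x', h1, h2⟩ := ih _ h.2 j (by omega)
      refine ⟨x', ?_, h2⟩
      refine Nat.ModEq.trans ?_ h1
      rw [pow_succ', ← mul_assoc]
      exact Nat.ModEq.mul_right _ (Nat.mod_modEq _ _).symm

/-- Validity of the levels for `(u, v)`. -/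
def nzVal2 : List NzLv2 → ℕ → ℕ → Bool
  | [], cu, _ => cu % 6301 == 1
  | lv :: ls, cu, cv => lv.cu == cu && lv.cv == cv && nzPi % lv.P == 0 && (1 ≤ lv.ru : Bool) &&
      (1 ≤ lv.rv : Bool) &&
      cu ^ lv.ru % lv.P == 1 % lv.P && cv ^ lv.rv % lv.P == 1 % lv.P &&
      nzVal2 ls (cu ^ lv.ru % nzPi) (cv ^ lv.rv % nzPi)

theorem nz_lift (X x c r i k P : ℕ) (hr : 1 ≤ r) (hP : P ∣ nzPi) (hc : c ^ r ≡ 1 [MOD P])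
    (f : ℕ → Bool) (hX : X ≡ x * c ^ i [MOD nzPi]) (hk : k = r)
    (h : nzAll f c k x = true) :
    ∃ x' i', X ≡ x' * (c ^ r % nzPi) ^ i' [MOD nzPi] ∧ X ≡ x' [MOD P] ∧ f x' = true := by
  subst hk
  obtain ⟨x', h1, h2⟩ := nz_all_sound f c k x h (i % k) (Nat.mod_lt _ (by omega))
  have h3 : X ≡ x' * (c ^ k) ^ (i / k) [MOD nzPi] := by
    refine hX.trans ?_
    have : x * c ^ i = x * c ^ (i % k) * (c ^ k) ^ (i / k) := by
      rw [← pow_mul, mul_assoc, ← pow_add, Nat.mod_add_div]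
    rw [this]
    exact h1.mul_right _
  refine ⟨x', i / k, h3.trans ?_, ?_, h2⟩
  · exact Nat.ModEq.mul_left _ ((Nat.mod_modEq _ _).symm.pow _)
  · refine (h3.of_dvd hP).trans ?_
    have := (hc.pow (i / k)).mul_left x'
    rwa [one_pow, mul_one] at this

theorem nz_chk2_sound (f1 f2 w N X Y : ℕ) (fl : Bool)
    (hE : 9 * N + f1 + X * (f1 * Y + f2) = X * (Y * (f1 * X + f2) + f1))
    (hw : 9 * N ≡ w [MOD nzPi]) (ls : List NzLv2) (cu cv : ℕ) (hv : nzVal2 ls cu cv = true)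
    (x y i k : ℕ) (hx : X ≡ x * cu ^ i [MOD nzPi]) (hy : Y ≡ y * cv ^ k [MOD nzPi])
    (h : nzChk2 f1 f2 w fl ls x y = true) :
    fl = true ∧ f1 = 9 ∧ f2 = 8 ∧ 10 * X ≡ 1 [MOD 6301] := by
  induction ls generalizing cu cv x y i k with
  | nil =>
    have h' : nzAnd fl (nzAnd (Nat.beq f1 9) (nzAnd (Nat.beq f2 8)
      (Nat.beq (10 * x % 6301) 1))) = true := h
    simp only [nzAnd_eq, Nat.beq_eq] at h'
    obtain ⟨h1, h2, h3, h4⟩ := h'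
    refine ⟨h1, h2, h3, ?_⟩
    have hc : cu ≡ 1 [MOD 6301] := by
      simpa [nzVal2, Nat.ModEq] using hv
    have hx2 := (hx.of_dvd (by decide +kernel : 6301 ∣ nzPi)).trans ((hc.pow i).mul_left x)
    rw [one_pow, mul_one] at hx2
    exact (hx2.mul_left 10).trans h4
  | cons lv ls ih =>
    have h' : nzAll (fun x => nzAll
      (fun y => nzImp (nzTest2 lv.P f1 f2 w x y) (nzChk2 f1 f2 w fl ls x y)) lv.cv lv.rv y)
        lv.cu lv.ru x = true := h
    simp only [nzVal2, Bool.and_eq_true, beq_iff_eq, decide_eq_true_eq] at hv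
    obtain ⟨⟨⟨⟨⟨⟨⟨v1, v2⟩, v3⟩, v4⟩, v5⟩, v6⟩, v7⟩, v8⟩ := hv
    rw [v1, v2] at h'
    have hP := Nat.dvd_of_mod_eq_zero v3
    obtain ⟨x', i', a1, a2, a3⟩ := nz_lift X x cu lv.ru i _ lv.P v4 hP v6 _ hx rfl h'
    obtain ⟨y', k', b1, b2, b3⟩ := nz_lift Y y cv lv.rv k _ lv.P v5 hP v7 _ hy rfl a3
    rw [nzImp_eq] at b3
    refine ih _ _ v8 x' y' i' k' a1 b1 (b3 ?_)
    have ht : nzTest2 lv.P f1 f2 w x' y' = Nat.beq ((w + f1 + x' * (f1 * y' + f2)) % lv.P)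
      ((x' * (y' * (f1 * x' + f2) + f1)) % lv.P) := rfl
    rw [ht, Nat.beq_eq]
    have e1 : 9 * N + f1 + X * (f1 * Y + f2) ≡ w + f1 + x' * (f1 * y' + f2) [MOD lv.P] :=
      ((hw.of_dvd hP).add_right _).add (a2.mul ((b2.mul_left _).add_right _))
    have e2 : X * (Y * (f1 * X + f2) + f1) ≡ x' * (y' * (f1 * x' + f2) + f1) [MOD lv.P] :=
      a2.mul ((b2.mul ((a2.mul_left _).add_right _)).add_right _)
    rw [hE] at e1
    exact e1.symm.trans e2

/-- `a + b t + c t ^ 2` represents `t ^ n` modulo `M`. -/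
def NzRep (M n a b c : ℕ) : Prop :=
  ∀ i, narayana (n + i) ≡ a * narayana i + b * narayana (i + 1) + c * narayana (i + 2) [MOD M]

theorem NzRep.mul {M n m a b c d e g : ℕ} (h1 : NzRep M n a b c) (h2 : NzRep M m d e g)
    {a' b' c' : ℕ} (ha : a * d + (b * g + c * e) + c * g ≡ a' [MOD M])
    (hb : a * e + b * d + c * g ≡ b' [MOD M])
    (hc : a * g + b * e + c * d + (b * g + c * e) + c * g ≡ c' [MOD M]) :
    NzRep M (n + m) a' b' c' := by
  intro i
  have r3 : narayana (i + 3) = narayana (i + 2) + narayana i := rfl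
  have r4 : narayana (i + 4) = narayana (i + 3) + narayana (i + 1) := rfl
  have k0 := h2 i
  have k1 := h2 (i + 1)
  have k2 := h2 (i + 2)
  have k := h1 (m + i)
  rw [show n + m + i = n + (m + i) by ring]
  refine k.trans ?_
  rw [show m + i + 1 = m + (i + 1) by ring, show m + i + 2 = m + (i + 2) by ring]
  refine (((k0.mul_left a).add (k1.mul_left b)).add (k2.mul_left c)).trans ?_
  have e := ((ha.mul_right (narayana i)).add (hb.mul_right (narayana (i + 1)))).add
    (hc.mul_right (narayana (i + 2)))
  refine Nat.ModEq.trans ?_ e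
  rw [show i + 1 + 1 = i + 2 by ring, show i + 1 + 2 = i + 3 by ring, show i + 2 + 1 = i + 3 by ring,
    show i + 2 + 2 = i + 4 by ring, r4, r3]
  apply nz_modEq_of_eq
  ring

theorem NzRep.val {M n a b c : ℕ} (h : NzRep M n a b c) : narayana n ≡ b + c [MOD M] := by
  simpa [narayana] using h 0

theorem nz_rep_one (M : ℕ) : NzRep M 1 0 1 0 := fun i => by
  rw [add_comm 1 i]; simp [Nat.ModEq]

theorem nz_rep_zero (M : ℕ) : NzRep M 0 1 0 0 := fun i => by
  simp [Nat.ModEq]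

theorem NzRep.period {P A : ℕ} (h : NzRep P A 1 0 0) (n i : ℕ) :
    narayana (n + A * i) ≡ narayana n [MOD P] := by
  induction i with
  | zero => simp [Nat.ModEq]
  | succ i ih =>
    refine Nat.ModEq.trans ?_ ih
    have := h (n + A * i)
    rw [show n + A * (i + 1) = A + (n + A * i) by ring]
    simpa using this

theorem nzLoop1_succ (f : ℕ → ℕ → ℕ → ℕ → Bool) (A d e g k n a b c : ℕ) :
    nzLoop1 f A d e g (k + 1) n a b c = nzAnd (f n a b c)
      (nzLoop1 f A d e g k (n + A) ((a * d + (b * g + c * e) + c * g) % nzMM)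
        ((a * e + b * d + c * g) % nzMM)
        ((a * g + b * e + c * d + (b * g + c * e) + c * g) % nzMM)) := by
  have : nzLoop1 f A d e g (k + 1) n a b c = nzAnd (f n a b c)
      (nzF (b * g + c * e) fun p3 => nzF (c * g) fun p4 => nzF (n + A) fun n' =>
        nzF ((a * d + p3 + p4) % nzMM) fun a' => nzF ((a * e + b * d + p4) % nzMM) fun b' =>
        nzF ((a * g + b * e + c * d + p3 + p4) % nzMM) fun c' =>
          nzLoop1 f A d e g k n' a' b' c') := rfl
  rw [this]; simp only [nzF_eq]

theorem nz_loop1_sound (f : ℕ → ℕ → ℕ → ℕ → Bool) (A d e g : ℕ) (hS : NzRep nzMM A d e g)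
    (k n a b c : ℕ) (hT : NzRep nzMM n a b c) (h : nzLoop1 f A d e g k n a b c = true) (j : ℕ)
    (hj : j < k) : ∃ a' b' c', NzRep nzMM (n + A * j) a' b' c' ∧ f (n + A * j) a' b' c' = true := by
  induction k generalizing n a b c j with
  | zero => omega
  | succ k ih =>
    rw [nzLoop1_succ, nzAnd_eq] at h
    cases j with
    | zero => exact ⟨a, b, c, hT, h.1⟩
    | succ j =>
      obtain ⟨a', b', c', h1, h2⟩ := ih _ _ _ _
        (hT.mul hS (Nat.mod_modEq _ _).symm (Nat.mod_modEq _ _).symm (Nat.mod_modEq _ _).symm)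
        h.2 j (by omega)
      have e : n + A + A * j = n + A * (j + 1) := by ring
      rw [e] at h1 h2
      exact ⟨a', b', c', h1, h2⟩

/-- Iterated multiplication of triples. -/
def nzPow (d e g : ℕ) : ℕ → ℕ × ℕ × ℕ
  | 0 => (1, 0, 0)
  | k + 1 =>
    let T := nzPow d e g k
    ((T.1 * d + (T.2.1 * g + T.2.2 * e) + T.2.2 * g) % nzMM,
      (T.1 * e + T.2.1 * d + T.2.2 * g) % nzMM,
      (T.1 * g + T.2.1 * e + T.2.2 * d + (T.2.1 * g + T.2.2 * e) + T.2.2 * g) % nzMM)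

theorem nz_pow_rep (A d e g : ℕ) (hS : NzRep nzMM A d e g) (k : ℕ) :
    NzRep nzMM (A * k) (nzPow d e g k).1 (nzPow d e g k).2.1 (nzPow d e g k).2.2 := by
  induction k with
  | zero => exact nz_rep_zero _
  | succ k ih =>
    exact ih.mul hS (Nat.mod_modEq _ _).symm (Nat.mod_modEq _ _).symm (Nat.mod_modEq _ _).symm

theorem NzRep.one_of {M P n a b c : ℕ} (h : NzRep M n a b c) (hP : P ∣ M) (ha : a % P = 1 % P)
    (hb : b % P = 0) (hc : c % P = 0) : NzRep P n 1 0 0 := by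
  intro i
  refine ((h i).of_dvd hP).trans ?_
  have ha' : a ≡ 1 [MOD P] := ha
  have hb' : b ≡ 0 [MOD P] := by rw [Nat.ModEq, hb, Nat.zero_mod]
  have hc' : c ≡ 0 [MOD P] := by rw [Nat.ModEq, hc, Nat.zero_mod]
  exact ((ha'.mul_right _).add (hb'.mul_right _)).add (hc'.mul_right _)

/-- Validity of the levels for `n`. -/
def nzVal1 : List NzLv1 → ℕ → ℕ × ℕ × ℕ → Bool
  | [], A, S => A % 14 == 0 && S.1 % nzPi == 1 && S.2.1 % nzPi == 0 && S.2.2 % nzPi == 0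
  | lv :: ls, A, S => lv.A == A && lv.a == S.1 && lv.b == S.2.1 && lv.c == S.2.2 &&
      10000 % lv.P == 0 && nzMM % lv.P == 0 && (1 ≤ lv.r : Bool) &&
      (nzPow S.1 S.2.1 S.2.2 lv.r).1 % lv.P == 1 % lv.P &&
      (nzPow S.1 S.2.1 S.2.2 lv.r).2.1 % lv.P == 0 &&
      (nzPow S.1 S.2.1 S.2.2 lv.r).2.2 % lv.P == 0 &&
      nzVal1 ls (A * lv.r) (nzPow S.1 S.2.1 S.2.2 lv.r)

theorem nz_chk1_sound (f1 f2 X x0 n : ℕ) (l2 : List NzLv2)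
    (hE : 9 * narayana n + f1 + f2 * X ≡ f1 * X [MOD 10000])
    (ls : List NzLv1) (A : ℕ) (S : ℕ × ℕ × ℕ) (hv : nzVal1 ls A S = true)
    (hS : NzRep nzMM A S.1 S.2.1 S.2.2) (n0 i a b c : ℕ) (hn : n = n0 + A * i)
    (hT : NzRep nzMM n0 a b c) (h : nzChk1 f1 f2 X x0 l2 ls n0 a b c = true) :
    ∃ w fl, 9 * narayana n ≡ w [MOD nzPi] ∧ (fl = true → 14 ∣ n + 4) ∧
      nzChk2 f1 f2 w fl l2 x0 1 = true := by
  induction ls generalizing A S n0 i a b c with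
  | nil =>
    have h' : (nzF (9 * (b + c) % nzPi) fun w =>
      nzChk2 f1 f2 w (Nat.beq ((n0 + 4) % 14) 0) l2 x0 1) = true := h
    rw [nzF_eq] at h'
    simp only [nzVal1, Bool.and_eq_true, beq_iff_eq] at hv
    obtain ⟨⟨⟨v1, v2⟩, v3⟩, v4⟩ := hv
    refine ⟨_, _, ?_, ?_, h'⟩
    · have hd : nzPi ∣ nzMM := by decide +kernel
      have hp : NzRep nzPi A 1 0 0 := hS.one_of hd
        (by rw [v2]; decide +kernel) v3 v4
      rw [hn]
      refine ((hp.period n0 i).mul_left 9).trans ?_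
      exact ((hT.val.of_dvd hd).mul_left 9).trans (Nat.mod_modEq _ _).symm
    · intro hf
      rw [Nat.beq_eq] at hf
      rw [hn, show n0 + A * i + 4 = (n0 + 4) + A * i by ring]
      exact dvd_add (Nat.dvd_of_mod_eq_zero hf) (Dvd.dvd.mul_right (Nat.dvd_of_mod_eq_zero v1) _)
  | cons lv ls ih =>
    have h' : nzLoop1 (fun n a b c =>
      nzImp (Nat.beq ((9 * (b + c) + f1 + f2 * X) % lv.P) (f1 * X % lv.P))
        (nzChk1 f1 f2 X x0 l2 ls n a b c)) lv.A lv.a lv.b lv.c lv.r n0 a b c = true := h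
    simp only [nzVal1, Bool.and_eq_true, beq_iff_eq, decide_eq_true_eq] at hv
    obtain ⟨⟨⟨⟨⟨⟨⟨⟨⟨⟨v1, v2⟩, v3⟩, v4⟩, v5⟩, v6⟩, v7⟩, v8⟩, v9⟩, v10⟩, v11⟩ := hv
    rw [v1, v2, v3, v4] at h'
    obtain ⟨a', b', c', g1, g2⟩ := nz_loop1_sound _ A _ _ _ hS lv.r n0 a b c hT h' (i % lv.r)
      (Nat.mod_lt _ (by omega))
    have hS' := nz_pow_rep A _ _ _ hS lv.r
    have hn' : n = n0 + A * (i % lv.r) + A * lv.r * (i / lv.r) := by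
      rw [hn, mul_assoc, add_assoc, ← mul_add, Nat.mod_add_div]
    rw [nzImp_eq] at g2
    refine ih (A * lv.r) _ v11 hS' _ (i / lv.r) a' b' c' hn' g1 (g2 ?_)
    rw [Nat.beq_eq]
    have hP := Nat.dvd_of_mod_eq_zero v6
    have hp : NzRep lv.P (A * lv.r) 1 0 0 := hS'.one_of hP v8 v9 v10
    have k1 := (hE.of_dvd (Nat.dvd_of_mod_eq_zero v5))
    have k2 : narayana n ≡ b' + c' [MOD lv.P] := by
      rw [hn']
      exact (hp.period _ _).trans (g1.val.of_dvd hP)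
    exact (((k2.mul_left 9).add_right f1).add_right (f2 * X)).symm.trans k1

theorem nz_run_sound (f1 X x0 : ℕ) (l2 : List NzLv2) (k : ℕ) (h : nzRun f1 X x0 l2 k = true) (f2 : ℕ)
    (hf : f2 < k) (hne : f1 ≠ f2) : nzChk1 f1 f2 X x0 l2 nzL1 0 1 0 0 = true := by
  induction k with
  | zero => omega
  | succ k ih =>
    have h' : nzAnd (nzRun f1 X x0 l2 k) (nzImp (Bool.not (Nat.beq f1 k))
      (nzChk1 f1 k X x0 l2 nzL1 0 1 0 0)) = true := h
    rw [nzAnd_eq, nzImp_eq] at h'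
    rcases Nat.lt_succ_iff_lt_or_eq.mp hf with h1 | rfl
    · exact ih h'.1 h1
    · apply h'.2
      rw [Bool.not_eq_true']
      rw [← Bool.not_eq_true, Nat.beq_eq]
      exact hne

theorem nz_val1 : nzVal1 nzL1 1 (0, 1, 0) = true := by decide +kernel

theorem nz_val2 : nzVal2 nzL2 10 10 = true := by decide +kernel

theorem nz_val3 : nzVal2 nzL3 1 10 = true := by decide +kernel

theorem nz_sieve (n f1 f2 X x0 u v : ℕ) (l2 : List NzLv2) (cu : ℕ) (hv : nzVal2 l2 cu 10 = true)
    (i : ℕ) (hx : 10 ^ u = x0 * cu ^ i)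
    (hE : 9 * narayana n + f1 + 10 ^ u * (f1 * 10 ^ v + f2) =
      10 ^ u * (10 ^ v * (f1 * 10 ^ u + f2) + f1))
    (hX : 9 * narayana n + f1 + f2 * X ≡ f1 * X [MOD 10000])
    (h : nzRun f1 X x0 l2 10 = true) (hf : f2 < 10) (hne : f1 ≠ f2) :
    14 ∣ n + 4 ∧ f1 = 9 ∧ f2 = 8 ∧ 10 * 10 ^ u ≡ 1 [MOD 6301] := by
  have h1 := nz_run_sound f1 X x0 l2 10 h f2 hf hne
  obtain ⟨w, fl, g1, g2, g3⟩ := nz_chk1_sound f1 f2 X x0 n l2 hX nzL1 1 (0, 1, 0) nz_val1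
    (nz_rep_one _) 0 n 1 0 0 (by ring) (nz_rep_zero _) h1
  obtain ⟨e1, e2⟩ := nz_chk2_sound f1 f2 w (narayana n) (10 ^ u) (10 ^ v) fl hE g1 l2 cu 10 hv x0 1 i v
    (nz_modEq_of_eq hx) (nz_modEq_of_eq (by ring)) g3
  exact ⟨g2 e1, e2⟩

theorem nz_run4 : ∀ f1 < 9, nzRun (f1 + 1) 0 1 nzL2 10 = true := by decide +kernel
theorem nz_run1 : ∀ f1 < 9, nzRun (f1 + 1) 10 10 nzL3 10 = true := by decide +kernel
theorem nz_run2 : ∀ f1 < 9, nzRun (f1 + 1) 100 100 nzL3 10 = true := by decide +kernel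
theorem nz_run3 : ∀ f1 < 9, nzRun (f1 + 1) 1000 1000 nzL3 10 = true := by decide +kernel

theorem nz_mono : Monotone narayana := by
  apply monotone_nat_of_le_succ
  intro n
  match n with
  | 0 => decide
  | 1 => decide
  | n + 2 => exact Nat.le_add_right (narayana (n + 2)) (narayana n)

theorem nz_fin0 : ∀ n < 40, ∀ f1 < 10, ∀ f2 < 10, (decide (f1 = f2) || !decide (99 < narayana n) ||
    !(decide (narayana n = 101 * f1 + 10 * f2) || decide (narayana n = 1001 * f1 + 110 * f2) ||
      decide (narayana n = 11011 * f1 + 100 * f2)) || decide (narayana n = 595)) = true := by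
  decide +kernel

theorem nz_ord0 : ∀ a < 50, ∀ b < 60, 10 * 10 ^ (60 * a + b) % 6301 ≠ 1 := by decide +kernel

theorem nz_ord (u : ℕ) (hu : u < 3000) : 10 * 10 ^ u % 6301 ≠ 1 := by
  have := nz_ord0 (u / 60) (by omega) (u % 60) (by omega)
  rwa [Nat.div_add_mod] at this

theorem nz_rep9 (u : ℕ) : 9 * ((10 ^ u - 1) / 9) + 1 = 10 ^ u := by
  have h : 9 ∣ 10 ^ u - 1 := by
    have := Nat.sub_dvd_pow_sub_pow 10 1 u
    simpa using this
  have h1 : 1 ≤ 10 ^ u := Nat.one_le_pow _ _ (by norm_num)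
  omega

theorem narayana_palindromic_concat (n u1 u2 f1 f2 : ℕ)
    (hf1 : 1 ≤ f1) (hf1' : f1 ≤ 9) (hf2 : f2 ≤ 9) (hne : f1 ≠ f2)
    (hu1 : 1 ≤ u1) (hu2 : 1 ≤ u2)
    (hbig : 99 < narayana n)
    (heq : narayana n = f1 * ((10 ^ u1 - 1) / 9) * 10 ^ (u1 + u2)
      + f2 * ((10 ^ u2 - 1) / 9) * 10 ^ u1 + f1 * ((10 ^ u1 - 1) / 9)) :
    narayana n = 595 := by
  have hE : 9 * narayana n + f1 + 10 ^ u1 * (f1 * 10 ^ u2 + f2) =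
      10 ^ u1 * (10 ^ u2 * (f1 * 10 ^ u1 + f2) + f1) := by
    have a1 := nz_rep9 u1
    have a2 := nz_rep9 u2
    rw [heq, pow_add]
    generalize (10 ^ u1 - 1) / 9 = R1 at *
    generalize (10 ^ u2 - 1) / 9 = R2 at *
    rw [← a1, ← a2]
    ring
  have hfin : (u1 = 1 ∧ u2 = 1) ∨ (u1 = 1 ∧ u2 = 2) ∨ (u1 = 2 ∧ u2 = 1) → narayana n = 595 := by
    intro h
    have hN : narayana n = 101 * f1 + 10 * f2 ∨ narayana n = 1001 * f1 + 110 * f2 ∨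
        narayana n = 11011 * f1 + 100 * f2 := by
      rcases h with ⟨rfl, rfl⟩ | ⟨rfl, rfl⟩ | ⟨rfl, rfl⟩ <;> norm_num at heq <;> omega
    have hn : n < 40 := by
      by_contra hc
      push Not at hc
      have h1 := nz_mono hc
      have h2 : 1000000 < narayana 40 := by decide +kernel
      omega
    have h := nz_fin0 n hn f1 (by omega) f2 (by omega)
    simp only [Bool.or_eq_true, decide_eq_true_eq, Bool.not_eq_true', decide_eq_false_iff_not,
      Bool.or_eq_false_iff] at h
    omega
  by_cases hf : (u1 = 1 ∧ u2 = 1) ∨ (u1 = 1 ∧ u2 = 2) ∨ (u1 = 2 ∧ u2 = 1)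
  · exact hfin hf
  exfalso
  have hmain : 14 ∣ n + 4 ∧ f1 = 9 ∧ f2 = 8 ∧ 10 * 10 ^ u1 ≡ 1 [MOD 6301] := by
    have e1 : f1 - 1 + 1 = f1 := by omega
    have hsmall : 4 ≤ u1 + u2 → u1 ≤ 3 → 9 * narayana n + f1 + f2 * 10 ^ u1 ≡ f1 * 10 ^ u1 [MOD 10000] := by
      intro h4 _
      obtain ⟨z, hz⟩ : 10000 ∣ 10 ^ u1 * 10 ^ u2 := by
        rw [← pow_add]; exact pow_dvd_pow 10 h4
      have k : 9 * narayana n + f1 + f2 * 10 ^ u1 + 10000 * (z * f1) =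
          f1 * 10 ^ u1 + 10000 * (z * (f1 * 10 ^ u1 + f2)) := by
        have q1 : 10000 * (z * f1) = 10 ^ u1 * 10 ^ u2 * f1 := by rw [hz]; ring
        have q2 : 10000 * (z * (f1 * 10 ^ u1 + f2)) = 10 ^ u1 * 10 ^ u2 * (f1 * 10 ^ u1 + f2) := by
          rw [hz]; ring
        rw [q1, q2]
        linear_combination hE
      have : 9 * narayana n + f1 + f2 * 10 ^ u1 + 10000 * (z * f1) ≡
          f1 * 10 ^ u1 + 10000 * (z * (f1 * 10 ^ u1 + f2)) [MOD 10000] := by rw [k]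
      simpa [Nat.ModEq] using this
    rcases le_or_gt 4 u1 with h4 | h4
    · have hr := nz_run4 (f1 - 1) (by omega)
      rw [e1] at hr
      refine nz_sieve n f1 f2 0 1 u1 u2 nzL2 10 nz_val2 u1 (by ring) hE ?_ hr (by omega) hne
      obtain ⟨z, hz⟩ : 10000 ∣ 10 ^ u1 := pow_dvd_pow 10 h4
      have hE2 := hE
      rw [hz, mul_assoc, mul_assoc] at hE2
      have : 9 * narayana n + f1 + 10000 * (z * (f1 * 10 ^ u2 + f2)) ≡
          0 + 10000 * (z * (10 ^ u2 * (f1 * (10000 * z) + f2) + f1)) [MOD 10000] := by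
        rw [hE2, zero_add]
      simpa [Nat.ModEq] using this
    · have h3 := hsmall (by omega) (by omega)
      have hc : u1 = 1 ∨ u1 = 2 ∨ u1 = 3 := by omega
      rcases hc with rfl | rfl | rfl
      · have hr := nz_run1 (f1 - 1) (by omega)
        rw [e1] at hr
        exact nz_sieve n f1 f2 10 10 1 u2 nzL3 1 nz_val3 0 (by norm_num) hE h3 hr (by omega) hne
      · have hr := nz_run2 (f1 - 1) (by omega)
        rw [e1] at hr
        exact nz_sieve n f1 f2 100 100 2 u2 nzL3 1 nz_val3 0 (by norm_num) hE h3 hr (by omega) hne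
      · have hr := nz_run3 (f1 - 1) (by omega)
        rw [e1] at hr
        exact nz_sieve n f1 f2 1000 1000 3 u2 nzL3 1 nz_val3 0 (by norm_num) hE h3 hr (by omega) hne
  obtain ⟨h14, rfl, rfl, ho⟩ := hmain
  have hu : 3000 ≤ u1 := by
    by_contra hc
    push Not at hc
    exact nz_ord u1 hc ho
  refine nz_nine' n u1 u2 hu h14 ?_
  have p1 : 10 ^ (u1 + u2) = 10 ^ u1 * 10 ^ u2 := pow_add _ _ _
  have p2 : 10 ^ (2 * u1 + u2) = 10 ^ u1 * 10 ^ u1 * 10 ^ u2 := by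
    rw [pow_add, two_mul, pow_add]
  rw [p1, p2]
  nlinarith [hE]
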